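/- arXiv:2211.17116 — 5 statements merged into one kernel-verified Lean document; each statement's English description precedes it below -/
import Mathlib

section
/- Suppose the tuple (Q_1,…,Q_n) of functions Q_i : S×A → ℝ is (ν,μ)-decay. Fix β ∈ ℕ and, for each i, nonnegative weights w(s_{N_{-i}^β}, a_{N_{-i}^β}; s_{N_i^β}, a_{N_i^β}) which, for each fixed (s_{N_i^β},a_{N_i^β}), sum to 1 over (s_{N_{-i}^β}, a_{N_{-i}^β}); define the truncated function Q̂_i(s_{N_i^β},a_{N_i^β}) = ∑_{s_{N_{-i}^β},a_{N_{-i}^β}} w(s_{N_{-i}^β},a_{N_{-i}^β}; s_{N_i^β},a_{N_i^β}) Q_i(s,a). Then for every i, sup_{s,a} |Q_i(s,a) − Q̂_i(s_{N_i^β},a_{N_i^β})| ≤ ν/(β+1)^μ. -/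
open scoped BigOperators

noncomputable section

namespace LPI

/-- A probability distribution on a finite type, represented as a nonnegative
function summing to one. -/
def IsDist {X : Type} [Fintype X] (d : X → ℝ) : Prop :=
  (∀ x, 0 ≤ d x) ∧ ∑ x, d x = 1

/-- Total variation distance between two finitely supported distributions. -/
def tv {X : Type} [Fintype X] (d d' : X → ℝ) : ℝ :=
  (1 / 2) * ∑ x, |d x - d' x|

/-- A `σ`-regular distribution: positive entries with log-ratios bounded by `σ`. -/
def IsRegularDist {X : Type} (σ : ℝ) (d : X → ℝ) : Prop :=
  (∀ x, 0 < d x) ∧ ∀ x y, Real.log (d x / d y) ≤ σ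

/-- A `(ν,μ)`-decay matrix with respect to a distance function. -/
def IsDecayMat {n : ℕ} (dist : Fin n → Fin n → ℕ) (ν μ : ℝ)
    (M : Fin n → Fin n → ℝ) : Prop :=
  (∀ i j, 0 ≤ M i j) ∧
  (∀ i, ∑ j, M i j * ((dist i j : ℝ) + 1) ^ μ ≤ ν) ∧
  (∀ j, ∑ i, M i j * ((dist i j : ℝ) + 1) ^ μ ≤ ν)

variable {n : ℕ} {S A : Fin n → Type}
variable [∀ i, Fintype (S i)] [∀ i, Fintype (A i)]
variable [∀ i, DecidableEq (S i)] [∀ i, DecidableEq (A i)]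
variable [∀ i, Nonempty (S i)] [∀ i, Nonempty (A i)]

/-- Probability that the joint policy `ζ` selects the joint action `a` in state `s`. -/
def jprob (ζ : ∀ i : Fin n, (∀ j, S j) → A i → ℝ)
    (s : ∀ j, S j) (a : ∀ i, A i) : ℝ :=
  ∏ i, ζ i s (a i)

/-- Product of a tuple of local action distributions. -/
def prodd (π : ∀ i : Fin n, A i → ℝ) (a : ∀ i, A i) : ℝ :=
  ∏ i, π i (a i)

/-- A joint policy: each agent's local conditional distribution is a distribution. -/
def IsPolicy (ζ : ∀ i : Fin n, (∀ j, S j) → A i → ℝ) : Prop :=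
  ∀ i s, IsDist (ζ i s)

/-- Local transition kernels are distributions. -/
def IsKernel (P : ∀ i : Fin n, (∀ j, S j) → A i → S i → ℝ) : Prop :=
  ∀ i s a, IsDist (P i s a)

/-- The local kernel of agent `i` depends only on the states of the closed
neighborhood `N_i` of `i`. -/
def IsLocalKernel (G : SimpleGraph (Fin n))
    (P : ∀ i : Fin n, (∀ j, S j) → A i → S i → ℝ) : Prop :=
  ∀ i : Fin n, ∀ s s' : ∀ j, S j,
    (∀ j, (j = i ∨ G.Adj i j) → s j = s' j) → ∀ a, P i s a = P i s' a

/-- Factorized global transition probability `P(s'|s,a) = ∏ i P_i(s'_i|s,a_i)`. -/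
def Pglob (P : ∀ i : Fin n, (∀ j, S j) → A i → S i → ℝ)
    (s : ∀ j, S j) (a : ∀ i, A i) (s' : ∀ j, S j) : ℝ :=
  ∏ i, P i s (a i) (s' i)

/-- Global stage reward `r(s,a) = (1/n) ∑ i r_i(s_i,a_i)`. -/
def rglob (r : ∀ i : Fin n, S i → A i → ℝ) (s : ∀ j, S j) (a : ∀ i, A i) : ℝ :=
  (1 / (n : ℝ)) * ∑ i, r i (s i) (a i)

/-- Transition matrix on global states induced by joint policy `ζ`. -/
def Pmat (P : ∀ i : Fin n, (∀ j, S j) → A i → S i → ℝ)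
    (ζ : ∀ i : Fin n, (∀ j, S j) → A i → ℝ) :
    Matrix (∀ j, S j) (∀ j, S j) ℝ :=
  Matrix.of fun s s' => ∑ a : ∀ i, A i, jprob ζ s a * Pglob P s a s'

/-- Entropy-regularized one-step reward of policy `ζ`. -/
def gz (τ : ℝ) (r : ∀ i : Fin n, S i → A i → ℝ)
    (ζ : ∀ i : Fin n, (∀ j, S j) → A i → ℝ) (s : ∀ j, S j) : ℝ :=
  ∑ a : ∀ i, A i, jprob ζ s a * (rglob r s a - τ * Real.log (jprob ζ s a))

/-- Entropy-regularized value function `V^ζ = ∑_t γ^t (P^ζ)^t g^ζ`. -/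
def Vz (γ τ : ℝ) (P : ∀ i : Fin n, (∀ j, S j) → A i → S i → ℝ)
    (r : ∀ i : Fin n, S i → A i → ℝ)
    (ζ : ∀ i : Fin n, (∀ j, S j) → A i → ℝ) : (∀ j, S j) → ℝ :=
  fun s => ∑' t : ℕ, γ ^ t * ((Pmat P ζ ^ t).mulVec (gz τ r ζ)) s

/-- Objective `J(ζ) = ∑_s ρ(s) V^ζ(s)`. -/
def Jobj (γ τ : ℝ) (P : ∀ i : Fin n, (∀ j, S j) → A i → S i → ℝ)
    (r : ∀ i : Fin n, S i → A i → ℝ)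
    (ζ : ∀ i : Fin n, (∀ j, S j) → A i → ℝ) (ρ : (∀ j, S j) → ℝ) : ℝ :=
  ∑ s, ρ s * Vz γ τ P r ζ s

/-- Entropy-regularized Bellman optimal operator. -/
def bellman (γ τ : ℝ) (P : ∀ i : Fin n, (∀ j, S j) → A i → S i → ℝ)
    (r : ∀ i : Fin n, S i → A i → ℝ)
    (V : (∀ j, S j) → ℝ) : (∀ j, S j) → ℝ :=
  fun s => sSup { x : ℝ | ∃ π : ∀ i : Fin n, A i → ℝ, (∀ i, IsDist (π i)) ∧
    x = ∑ a : ∀ i, A i, prodd π a *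
      (rglob r s a - τ * Real.log (prodd π a) +
        γ * ∑ s', Pglob P s a s' * V s') }

/-- Local entropy-regularized one-step reward of agent `i`. -/
def gzi (τ : ℝ) (r : ∀ i : Fin n, S i → A i → ℝ)
    (ζ : ∀ i : Fin n, (∀ j, S j) → A i → ℝ) (i : Fin n) (s : ∀ j, S j) : ℝ :=
  ∑ a : ∀ k, A k, jprob ζ s a *
    (r i (s i) (a i) - (n : ℝ) * τ * Real.log (ζ i s (a i)))

/-- Local value function `V_i^ζ`. -/
def Vzi (γ τ : ℝ) (P : ∀ i : Fin n, (∀ j, S j) → A i → S i → ℝ)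
    (r : ∀ i : Fin n, S i → A i → ℝ)
    (ζ : ∀ i : Fin n, (∀ j, S j) → A i → ℝ) (i : Fin n) : (∀ j, S j) → ℝ :=
  fun s => ∑' t : ℕ, γ ^ t * ((Pmat P ζ ^ t).mulVec (gzi τ r ζ i)) s

/-- Local Q-function `Q_i^ζ(s,a) = r_i(s_i,a_i) + γ ∑_{s'} P(s'|s,a) V_i^ζ(s')`. -/
def Qzi (γ τ : ℝ) (P : ∀ i : Fin n, (∀ j, S j) → A i → S i → ℝ)
    (r : ∀ i : Fin n, S i → A i → ℝ)
    (ζ : ∀ i : Fin n, (∀ j, S j) → A i → ℝ) (i : Fin n)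
    (s : ∀ j, S j) (a : ∀ k, A k) : ℝ :=
  r i (s i) (a i) + γ * ∑ s', Pglob P s a s' * Vzi γ τ P r ζ i s'

/-- Global Q-function `Q^ζ(s,a) = r(s,a) + γ ∑_{s'} P(s'|s,a) V^ζ(s')`. -/
def Qglob (γ τ : ℝ) (P : ∀ i : Fin n, (∀ j, S j) → A i → S i → ℝ)
    (r : ∀ i : Fin n, S i → A i → ℝ)
    (ζ : ∀ i : Fin n, (∀ j, S j) → A i → ℝ)
    (s : ∀ j, S j) (a : ∀ k, A k) : ℝ :=
  rglob r s a + γ * ∑ s', Pglob P s a s' * Vz γ τ P r ζ s'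

/-- Interaction matrix `Z^ζ` of a joint policy. -/
def Zpol (ζ : ∀ i : Fin n, (∀ j, S j) → A i → ℝ) (i j : Fin n) : ℝ :=
  ⨆ s : ∀ k, S k, ⨆ sj : S j, tv (ζ i s) (ζ i (Function.update s j sj))

/-- Interaction matrix `Z^Q` of a tuple of local Q-functions: varying the
state-action pair of a single agent `j`. -/
def ZQ (Q : Fin n → (∀ j, S j) → (∀ j, A j) → ℝ) (i j : Fin n) : ℝ :=
  ⨆ s : ∀ k, S k, ⨆ a : ∀ k, A k, ⨆ sj : S j, ⨆ aj : A j,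
    |Q i s a - Q i (Function.update s j sj) (Function.update a j aj)|

/-- Second-order interaction matrix `H^Q` of a global Q-function. -/
def HQ (Q : (∀ j, S j) → (∀ j, A j) → ℝ) (i j : Fin n) : ℝ :=
  ⨆ s : ∀ k, S k, ⨆ a : ∀ k, A k, ⨆ si : S i, ⨆ ai : A i, ⨆ sj : S j, ⨆ aj : A j,
    |(Q s a - Q (Function.update s i si) (Function.update a i ai)) -
      (Q (Function.update s j sj) (Function.update a j aj) -
        Q (Function.update (Function.update s i si) j sj)
          (Function.update (Function.update a i ai) j aj))|

/-- The matrix `C` measuring interaction strength of the transition kernels. -/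
def Cmat (G : SimpleGraph (Fin n)) [DecidableRel G.Adj]
    (P : ∀ i : Fin n, (∀ j, S j) → A i → S i → ℝ) (i j : Fin n) : ℝ :=
  if j = i then
    ⨆ s : ∀ k, S k, ⨆ si' : S i, ⨆ ai : A i, ⨆ ai' : A i,
      tv (P i s ai) (P i (Function.update s i si') ai')
  else if G.Adj i j then
    ⨆ s : ∀ k, S k, ⨆ sj' : S j, ⨆ ai : A i,
      tv (P i s ai) (P i (Function.update s j sj') ai)
  else 0

/-- A `σ`-regular joint policy. -/
def IsRegularPolicy (σ : ℝ) (ζ : ∀ i : Fin n, (∀ j, S j) → A i → ℝ) : Prop :=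
  ∀ i s, IsRegularDist σ (ζ i s)

/-- A `(ν,μ)`-decay joint policy. -/
def IsDecayPolicy (dist : Fin n → Fin n → ℕ) (ν μ : ℝ)
    (ζ : ∀ i : Fin n, (∀ j, S j) → A i → ℝ) : Prop :=
  IsDecayMat dist ν μ (Zpol ζ)

/-- The policy class `Δ_{ν,μ,σ}`. -/
def InDelta (dist : Fin n → Fin n → ℕ) (ν μ σ : ℝ)
    (ζ : ∀ i : Fin n, (∀ j, S j) → A i → ℝ) : Prop :=
  IsPolicy ζ ∧ IsDecayPolicy dist ν μ ζ ∧ IsRegularPolicy σ ζ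

/-- A `κ`-hop localized joint policy. -/
def IsKHop (G : SimpleGraph (Fin n)) (κ : ℕ)
    (ζ : ∀ i : Fin n, (∀ j, S j) → A i → ℝ) : Prop :=
  ∀ i : Fin n, ∀ s s' : ∀ j, S j,
    (∀ j, G.dist i j ≤ κ → s j = s' j) → ζ i s = ζ i s'

/-- The largest local action space cardinality `A_max`. -/
def Amax (A : Fin n → Type) [∀ i, Fintype (A i)] : ℕ :=
  Finset.univ.sup fun i => Fintype.card (A i)

/-- An irreducible stochastic matrix on a finite set. -/
def MatIrreducible {X : Type} [Fintype X] [DecidableEq X] (M : Matrix X X ℝ) : Prop :=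
  ∀ s s', ∃ t : ℕ, 1 ≤ t ∧ 0 < (M ^ t) s s'

/-- An aperiodic stochastic matrix: for each state `s`, the only common divisor
of the return times is `1` (i.e. `gcd {t ≥ 1 | (M^t)_{ss} > 0} = 1`). -/
def MatAperiodic {X : Type} [Fintype X] [DecidableEq X] (M : Matrix X X ℝ) : Prop :=
  ∀ s, ∀ d : ℕ, (∀ t : ℕ, 1 ≤ t → 0 < (M ^ t) s s → d ∣ t) → d = 1

/-- A stationary distribution of a transition matrix. -/
def IsStationary {X : Type} [Fintype X] (M : Matrix X X ℝ) (μ : X → ℝ) : Prop :=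
  IsDist μ ∧ Matrix.vecMul μ M = μ


/-!
Two configurations that agree on the `β`-hop neighborhood of `i` are joined by a path that changes
one agent outside the neighborhood at a time, so the values of `Q_i` differ by at most the part of
row `i` of `Z^Q` outside the neighborhood. There the decay weight is at least `(β + 1)^μ`, so this
tail is at most `ν / (β + 1)^μ`. Hence all values averaged by the truncation lie in one closed ball
around `Q_i(s, a)`, and by convexity so does their average.
-/

theorem dist_le_sum_of_dist_update_le {ι : Type*} [DecidableEq ι] {X : ι → Type*} {α : Type*}
    [PseudoMetricSpace α] {f : (∀ j, X j) → α} {c : ι → ℝ} {T : Finset ι}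
    (hf : ∀ j ∈ T, ∀ z v, dist (f z) (f (Function.update z j v)) ≤ c j) {x y : ∀ j, X j}
    (hxy : ∀ j ∉ T, x j = y j) : dist (f x) (f y) ≤ ∑ j ∈ T, c j := by
  induction T using Finset.induction_on generalizing y with
  | empty =>
    obtain rfl : x = y := funext fun j => hxy j (Finset.notMem_empty j)
    simp
  | insert j T hj ih =>
    have hxy' : ∀ k ∉ T, x k = Function.update y j (x j) k := by
      intro k hk
      rcases eq_or_ne k j with rfl | hkj
      · simp
      · simpa [hkj] using hxy k (by simp [hkj, hk])
    have hstep : dist (f (Function.update y j (x j))) (f y) ≤ c j := by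
      simpa using hf j (Finset.mem_insert_self j T) (Function.update y j (x j)) (y j)
    have hrest : dist (f x) (f (Function.update y j (x j))) ≤ ∑ k ∈ T, c k :=
      ih (fun k hk => hf k (Finset.mem_insert_of_mem hk)) hxy'
    rw [Finset.sum_insert hj, add_comm]
    exact (dist_triangle _ _ _).trans (add_le_add hrest hstep)

theorem abs_sub_update_le_ZQ {n : ℕ} {S A : Fin n → Type} [∀ j, Finite (S j)]
    [∀ j, Finite (A j)] (Q : Fin n → (∀ j, S j) → (∀ j, A j) → ℝ) (i j : Fin n)
    (s : ∀ j, S j) (a : ∀ j, A j) (sj : S j) (aj : A j) :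
    |Q i s a - Q i (Function.update s j sj) (Function.update a j aj)| ≤ ZQ Q i j :=
  le_ciSup_of_le (Set.finite_range _).bddAbove s <|
    le_ciSup_of_le (Set.finite_range _).bddAbove a <|
      le_ciSup_of_le (Set.finite_range _).bddAbove sj <|
        le_ciSup_of_le (Set.finite_range _).bddAbove aj le_rfl

theorem abs_sub_le_sum_ZQ {n : ℕ} {S A : Fin n → Type} [∀ j, Finite (S j)]
    [∀ j, Finite (A j)] (Q : Fin n → (∀ j, S j) → (∀ j, A j) → ℝ) (i : Fin n)
    {T : Finset (Fin n)} {s s' : ∀ j, S j} {a a' : ∀ j, A j}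
    (hs : ∀ j ∉ T, s j = s' j) (ha : ∀ j ∉ T, a j = a' j) :
    |Q i s a - Q i s' a'| ≤ ∑ j ∈ T, ZQ Q i j := by
  let f : (∀ j, S j × A j) → ℝ := fun z => Q i (fun j => (z j).1) (fun j => (z j).2)
  have hf : ∀ j ∈ T, ∀ z v, dist (f z) (f (Function.update z j v)) ≤ ZQ Q i j := by
    intro j _ z v
    have hfst : (fun k => (Function.update z j v k).1) = Function.update (fun k => (z k).1) j v.1 :=
      funext fun k => Function.apply_update (fun _ => Prod.fst) z j v k
    have hsnd : (fun k => (Function.update z j v k).2) = Function.update (fun k => (z k).2) j v.2 :=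
      funext fun k => Function.apply_update (fun _ => Prod.snd) z j v k
    simpa only [f, Real.dist_eq, hfst, hsnd] using
      abs_sub_update_le_ZQ Q i j (fun k => (z k).1) (fun k => (z k).2) v.1 v.2
  exact dist_le_sum_of_dist_update_le hf (x := fun j => (s j, a j)) (y := fun j => (s' j, a' j))
    fun j hj => Prod.ext (hs j hj) (ha j hj)

theorem IsDecayMat.sum_le_div_of_le_dist {n : ℕ} {d : Fin n → Fin n → ℕ} {ν μ : ℝ}
    {M : Fin n → Fin n → ℝ} (hM : IsDecayMat d ν μ M) (hμ : 0 ≤ μ) {i : Fin n} {β : ℕ}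
    {T : Finset (Fin n)} (hT : ∀ j ∈ T, β ≤ d i j) :
    ∑ j ∈ T, M i j ≤ ν / ((β : ℝ) + 1) ^ μ := by
  obtain ⟨hM_nonneg, hM_row, -⟩ := hM
  have hweight : ∀ j ∈ T, ((β : ℝ) + 1) ^ μ ≤ ((d i j : ℝ) + 1) ^ μ := fun j hj => by
    have := hT j hj
    gcongr
  rw [le_div_iff₀ (by positivity), Finset.sum_mul]
  calc
    ∑ j ∈ T, M i j * ((β : ℝ) + 1) ^ μ ≤ ∑ j ∈ T, M i j * ((d i j : ℝ) + 1) ^ μ :=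
      Finset.sum_le_sum fun j hj => mul_le_mul_of_nonneg_left (hweight j hj) (hM_nonneg i j)
    _ ≤ ∑ j, M i j * ((d i j : ℝ) + 1) ^ μ :=
      Finset.sum_le_univ_sum_of_nonneg fun j => mul_nonneg (hM_nonneg i j) (by positivity)
    _ ≤ ν := hM_row i

theorem IsDecayMat.abs_sub_le_of_eq_on_ball {n : ℕ} {S A : Fin n → Type} [∀ j, Finite (S j)]
    [∀ j, Finite (A j)] {d : Fin n → Fin n → ℕ} {Q : Fin n → (∀ j, S j) → (∀ j, A j) → ℝ}
    {ν μ : ℝ} (hQ : IsDecayMat d ν μ (ZQ Q)) (hμ : 0 ≤ μ) {i : Fin n} {β : ℕ}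
    {s s' : ∀ j, S j} {a a' : ∀ j, A j} (hs : ∀ j, d i j ≤ β → s j = s' j)
    (ha : ∀ j, d i j ≤ β → a j = a' j) :
    |Q i s a - Q i s' a'| ≤ ν / ((β : ℝ) + 1) ^ μ := by
  let T : Finset (Fin n) := {j | β < d i j}
  have hball : ∀ j ∉ T, d i j ≤ β := fun j hj => by simpa [T] using hj
  calc
    |Q i s a - Q i s' a'| ≤ ∑ j ∈ T, ZQ Q i j :=
      abs_sub_le_sum_ZQ Q i (fun j hj => hs j (hball j hj)) fun j hj => ha j (hball j hj)
    _ ≤ ν / ((β : ℝ) + 1) ^ μ :=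
      hQ.sum_le_div_of_le_dist hμ fun j hj => (Finset.mem_filter.mp hj).2.le

theorem stmt_2_general {n : ℕ} (d : Fin n → Fin n → ℕ) {S A : Fin n → Type}
    [∀ i, Fintype (S i)] [∀ i, Fintype (A i)]
    (Q : Fin n → (∀ j, S j) → (∀ j, A j) → ℝ) {ν μ : ℝ} (hμ : 0 ≤ μ)
    (hQ : IsDecayMat d ν μ (ZQ Q)) (β : ℕ)
    (w : ∀ _ : Fin n, (∀ j, S j) → (∀ j, A j) → (∀ j, S j) → (∀ j, A j) → ℝ)
    (hw0 : ∀ i s a s' a', 0 ≤ w i s a s' a')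
    (hw1 : ∀ i s a, ∑ s' : ∀ j, S j, ∑ a' : ∀ j, A j, w i s a s' a' = 1)
    (i : Fin n) (s : ∀ j, S j) (a : ∀ j, A j) :
    |Q i s a -
      ∑ s' : ∀ j, S j, ∑ a' : ∀ j, A j, w i s a s' a' *
        Q i (fun k => if d i k ≤ β then s k else s' k)
            (fun k => if d i k ≤ β then a k else a' k)| ≤
      ν / ((β : ℝ) + 1) ^ μ := by
  let weight : (∀ j, S j) × (∀ j, A j) → ℝ := fun z => w i s a z.1 z.2
  let value : (∀ j, S j) × (∀ j, A j) → ℝ := fun z =>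
    Q i (fun k => if d i k ≤ β then s k else z.1 k) (fun k => if d i k ≤ β then a k else z.2 k)
  have hvalue : ∀ z, value z ∈ Metric.closedBall (Q i s a) (ν / ((β : ℝ) + 1) ^ μ) := fun z => by
    rw [Metric.mem_closedBall', Real.dist_eq]
    exact hQ.abs_sub_le_of_eq_on_ball hμ (fun k hk => (if_pos hk).symm)
      fun k hk => (if_pos hk).symm
  have hsum : ∑ z, weight z = 1 := by simpa only [weight, Fintype.sum_prod_type] using hw1 i s a
  have haverage : ∑ z, weight z • value z ∈
      Metric.closedBall (Q i s a) (ν / ((β : ℝ) + 1) ^ μ) :=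
    (convex_closedBall _ _).sum_mem (fun z _ => hw0 i s a z.1 z.2) hsum fun z _ => hvalue z
  simpa only [Metric.mem_closedBall', Real.dist_eq, Fintype.sum_prod_type, smul_eq_mul] using
    haverage

/-- if the tuple `(Q_1,…,Q_n)` is `(ν,μ)`-decay, then any `β`-hop truncation
`Q̂_i` of `Q_i` — a weighted average, with weights summing to one, of the values of `Q_i`
over state-action configurations agreeing with `(s,a)` on the `β`-hop neighborhood
`N_i^β` of `i` — satisfies `sup_{s,a} |Q_i(s,a) − Q̂_i(s_{N_i^β},a_{N_i^β})| ≤ ν/(β+1)^μ`. -/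
theorem stmt_2 {n : ℕ} (G : SimpleGraph (Fin n))
    (S A : Fin n → Type)
    [∀ i, Fintype (S i)] [∀ i, Fintype (A i)]
    [∀ i, DecidableEq (S i)] [∀ i, DecidableEq (A i)]
    [∀ i, Nonempty (S i)] [∀ i, Nonempty (A i)]
    (Q : Fin n → (∀ j, S j) → (∀ j, A j) → ℝ)
    (ν μ : ℝ) (hν : 0 < ν) (hμ : 0 < μ)
    (hQ : IsDecayMat (fun i j => G.dist i j) ν μ (ZQ Q))
    (β : ℕ)
    (w : ∀ _ : Fin n, (∀ j, S j) → (∀ j, A j) → (∀ j, S j) → (∀ j, A j) → ℝ)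
    (hw0 : ∀ i s a s' a', 0 ≤ w i s a s' a')
    (hw1 : ∀ i s a, ∑ s' : ∀ j, S j, ∑ a' : ∀ j, A j, w i s a s' a' = 1) :
    ∀ (i : Fin n) (s : ∀ j, S j) (a : ∀ j, A j),
      |Q i s a -
        ∑ s' : ∀ j, S j, ∑ a' : ∀ j, A j, w i s a s' a' *
          Q i (fun k => if G.dist i k ≤ β then s k else s' k)
              (fun k => if G.dist i k ≤ β then a k else a' k)| ≤
        ν / ((β : ℝ) + 1) ^ μ :=
  stmt_2_general (fun i j => G.dist i j) Q hμ.le hQ β w hw0 hw1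

end LPI
end
end

section
/- Suppose γ < 0.8, τ ≥ 6 r̄ A_max² e (4−3γ)/(4−5γ), and ∑_{j∈N_i} C_{ij} < 1/2 for every i ∈ {1,…,n}. Let μ = min( log₂( τ(4−5γ) / (6 r̄ A_max² e (4−3γ)) ), log₂( 1 / (2 max_{i} ∑_{j∈N_i} C_{ij}) ) ). Then for every κ ∈ ℕ there exists a κ-hop joint policy ζ̂ such that for every joint policy ζ, J(ζ) − J(ζ̂) ≤ ( r̄ (4−3γ) / ((1−γ)(4−5γ)) ) · 1/(κ+1)^μ. -/
open scoped BigOperators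

noncomputable section

namespace LPI

/-!
At a joint state, the product policies maximizing the entropy-regularized payoff satisfy a softmax
fixed-point equation. If the payoff is an average of functions `Q m`, each of which depends weakly
on the agents far from `m`, and the temperature `τ` is large, this equation is a contraction that
transfers the decay to the maximizing policy. The decay class quantifies over all slowly varying
scales `R`: it bounds influences weighted by `R j ^ (-μ)`, and `∑ j, C i j ≤ 2 ^ (-μ)` says exactly
that one transition does not amplify them.

Differentiating the regularized maximum in the size of the payoff writes the Bellman operator as an
integral of expected payoffs, so it preserves, up to closure, the averages of local functions with
decay. Its fixed point, the optimal value, is therefore approximated by such an average. Truncating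
the state outside the `κ`-neighborhood of each agent then moves the maximizing policy by
`O((κ + 2) ^ (-μ))` in total variation. The payoff gap is a sum over the agents of influences whose
total is bounded independently of `n`. When `μ ≤ 0`, a constant policy is already good enough.
-/

section Expectation

variable {ι : Type*} [Fintype ι] [DecidableEq ι] {X Y : ι → Type}
  [∀ i, Fintype (X i)] [∀ i, Fintype (Y i)]

/-- The expectation of `f` under the product of the laws `p i`. It makes sense for arbitrary
weights, in which it is multilinear. -/
def expectation (p : ∀ i, X i → ℝ) (f : (∀ i, X i) → ℝ) : ℝ :=
  ∑ x, (∏ i, p i (x i)) * f x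

theorem expectation_prod (p : ∀ i, X i → ℝ) (f : ∀ i, X i → ℝ) :
    expectation p (fun x => ∏ i, f i (x i)) = ∏ i, ∑ y, p i y * f i y := by
  simp only [expectation, ← Finset.prod_mul_distrib]
  exact (Fintype.prod_sum fun i y => p i y * f i y).symm

theorem expectation_const {p : ∀ i, X i → ℝ} (hp : ∀ i, IsDist (p i)) (c : ℝ) :
    expectation p (fun _ => c) = c := by
  have hone : expectation p (fun _ => 1) = 1 := by
    simpa [(hp _).2] using expectation_prod p fun _ _ => 1
  simpa [expectation, Finset.sum_mul] using congrArg (· * c) hone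

theorem expectation_eval {p : ∀ i, X i → ℝ} (hp : ∀ i, IsDist (p i)) (i : ι) (h : X i → ℝ) :
    expectation p (fun x => h (x i)) = ∑ y, p i y * h y := by
  have hprod : (fun x : ∀ j, X j => h (x i)) =
      fun x => ∏ j, Function.update (fun _ _ => 1) i h j (x j) := by
    funext x
    rw [Fintype.prod_eq_single i fun j hj => by simp [Function.update_of_ne hj],
      Function.update_self]
  rw [hprod, expectation_prod, Fintype.prod_eq_single i, Function.update_self]
  intro j hj
  simp [Function.update_of_ne hj, (hp j).2]

theorem expectation_add (p : ∀ i, X i → ℝ) (f g : (∀ i, X i) → ℝ) :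
    expectation p (fun x => f x + g x) = expectation p f + expectation p g := by
  simp only [expectation, mul_add, Finset.sum_add_distrib]

theorem expectation_const_mul (p : ∀ i, X i → ℝ) (c : ℝ) (f : (∀ i, X i) → ℝ) :
    expectation p (fun x => c * f x) = c * expectation p f := by
  simp only [expectation, Finset.mul_sum, mul_left_comm]

theorem expectation_sub (p : ∀ i, X i → ℝ) (f g : (∀ i, X i) → ℝ) :
    expectation p (fun x => f x - g x) = expectation p f - expectation p g := by
  simp only [expectation, mul_sub, Finset.sum_sub_distrib]

theorem expectation_sum {κ : Type*} (t : Finset κ) (p : ∀ i, X i → ℝ)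
    (f : κ → (∀ i, X i) → ℝ) :
    expectation p (fun x => ∑ k ∈ t, f k x) = ∑ k ∈ t, expectation p (f k) := by
  simp only [expectation, Finset.mul_sum]
  exact Finset.sum_comm

theorem expectation_mono {p : ∀ i, X i → ℝ} (hp : ∀ i, IsDist (p i)) {f g : (∀ i, X i) → ℝ}
    (h : ∀ x, f x ≤ g x) : expectation p f ≤ expectation p g :=
  Finset.sum_le_sum fun x _ =>
    mul_le_mul_of_nonneg_left (h x) (Finset.prod_nonneg fun i _ => (hp i).1 _)

theorem expectation_update (p : ∀ i, X i → ℝ) (i : ι) [DecidableEq (X i)] (σ : X i → ℝ)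
    (f : (∀ i, X i) → ℝ) :
    expectation (Function.update p i σ) f =
      ∑ a, σ a * expectation (Function.update p i (Pi.single a 1)) f := by
  have hweight (τ : X i → ℝ) (x : ∀ i, X i) : ∏ j, Function.update p i τ j (x j) =
      τ (x i) * ∏ j ∈ Finset.univ.erase i, p j (x j) := by
    rw [← Finset.mul_prod_erase _ _ (Finset.mem_univ i), Function.update_self]
    congr 1
    exact Finset.prod_congr rfl fun j hj => by
      rw [Function.update_of_ne (Finset.ne_of_mem_erase hj)]
  simp only [expectation, hweight, Finset.mul_sum]
  rw [Finset.sum_comm]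
  refine Finset.sum_congr rfl fun x _ => ?_
  rw [Fintype.sum_eq_single (x i) fun a ha => by simp [Pi.single_eq_of_ne ha.symm],
    Pi.single_eq_same]
  ring

theorem expectation_map [∀ i, DecidableEq (Y i)] (p : ∀ i, X i → ℝ) (g : ∀ i, X i → Y i)
    (f : (∀ i, Y i) → ℝ) :
    expectation (fun i y => ∑ x with g i x = y, p i x) f =
      expectation p (fun x => f fun i => g i (x i)) := by
  have hfiber (y : ∀ i, Y i) : Fintype.piFinset (fun i => {x | g i x = y i}) =
      ({x | (fun i => g i (x i)) = y} : Finset (∀ i, X i)) := by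
    ext x
    simp [funext_iff]
  simp only [expectation, Finset.prod_univ_sum, hfiber, Finset.sum_mul]
  rw [← Finset.sum_fiberwise (Finset.univ : Finset (∀ i, X i)) (fun x i => g i (x i))]
  refine Finset.sum_congr rfl fun y _ => Finset.sum_congr rfl fun x hx => ?_
  rw [(Finset.mem_filter.1 hx).2]

end Expectation

section TotalVariation

variable {Y : Type} [Fintype Y] {p q : Y → ℝ}

theorem tv_nonneg (p q : Y → ℝ) : 0 ≤ tv p q := by
  unfold tv
  positivity

theorem tv_comm (p q : Y → ℝ) : tv p q = tv q p := by
  simp only [tv, abs_sub_comm]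

theorem tv_self (p : Y → ℝ) : tv p p = 0 := by
  simp [tv]

theorem tv_triangle (p q r : Y → ℝ) : tv p r ≤ tv p q + tv q r := by
  unfold tv
  rw [← mul_add, ← Finset.sum_add_distrib]
  gcongr
  exact abs_sub_le _ _ _

theorem tv_eq_one_sub_sum_min (hp : IsDist p) (hq : IsDist q) :
    tv p q = 1 - ∑ y, min (p y) (q y) := by
  have habs (y : Y) : |p y - q y| = p y + q y - 2 * min (p y) (q y) := by
    linarith [max_sub_min_eq_abs' (p y) (q y), min_add_max (p y) (q y)]
  simp only [tv, habs, Finset.sum_sub_distrib, Finset.sum_add_distrib, hp.2, hq.2,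
    ← Finset.mul_sum]
  ring

theorem tv_le_one (hp : IsDist p) (hq : IsDist q) : tv p q ≤ 1 := by
  rw [tv_eq_one_sub_sum_min hp hq]
  exact sub_le_self _ (Finset.sum_nonneg fun y _ => le_min (hp.1 y) (hq.1 y))

open Classical in
/-- The discrete metric: the cost of a coordinate on which two configurations disagree. -/
def mismatch {Z : Type*} (a b : Z) : ℝ :=
  if a = b then 0 else 1

theorem mismatch_self {Z : Type*} (a : Z) : mismatch a a = 0 :=
  if_pos rfl

theorem mismatch_of_ne {Z : Type*} {a b : Z} (h : a ≠ b) : mismatch a b = 1 :=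
  if_neg h

theorem mismatch_nonneg {Z : Type*} (a b : Z) : 0 ≤ mismatch a b := by
  unfold mismatch
  split_ifs <;> norm_num

theorem mismatch_le_one {Z : Type*} (a b : Z) : mismatch a b ≤ 1 := by
  unfold mismatch
  split_ifs <;> norm_num

theorem mismatch_comm {Z : Type*} (a b : Z) : mismatch a b = mismatch b a := by
  rcases eq_or_ne a b with rfl | h
  · rfl
  · rw [mismatch_of_ne h, mismatch_of_ne h.symm]

theorem mismatch_prod_le {Z W : Type*} (a b : Z) (x y : W) :
    mismatch (a, x) (b, y) ≤ mismatch a b + mismatch x y := by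
  rcases eq_or_ne a b with rfl | h
  · rcases eq_or_ne x y with rfl | h'
    · simp [mismatch_self]
    · simp [mismatch_self, mismatch_of_ne h', mismatch_of_ne (Prod.mk_right_injective a |>.ne h')]
  · have hne : (a, x) ≠ (b, y) := fun h' => h (congrArg Prod.fst h')
    simpa [mismatch_of_ne h, mismatch_of_ne hne] using mismatch_nonneg x y

theorem exists_joint_of_sum_eq {a b : Y → ℝ} {t : ℝ} (ha : ∀ x, 0 ≤ a x) (hb : ∀ y, 0 ≤ b y)
    (hat : ∑ x, a x = t) (hbt : ∑ y, b y = t) :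
    ∃ c : Y × Y → ℝ, (∀ z, 0 ≤ c z) ∧ (∀ x, ∑ y, c (x, y) = a x) ∧ ∀ y, ∑ x, c (x, y) = b y := by
  have ht : 0 ≤ t := hat ▸ Finset.sum_nonneg fun x _ => ha x
  have ha0 (h : t = 0) (x : Y) : a x = 0 :=
    (Finset.sum_eq_zero_iff_of_nonneg fun x _ => ha x).1 (hat.trans h) x (Finset.mem_univ x)
  have hb0 (h : t = 0) (y : Y) : b y = 0 :=
    (Finset.sum_eq_zero_iff_of_nonneg fun y _ => hb y).1 (hbt.trans h) y (Finset.mem_univ y)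
  refine ⟨fun z => a z.1 * b z.2 / t, fun z => div_nonneg (mul_nonneg (ha _) (hb _)) ht,
    fun x => ?_, fun y => ?_⟩
  · simp only [← Finset.sum_div, ← Finset.mul_sum, hbt, mul_div_cancel_of_imp (ha0 · x)]
  · simp only [← Finset.sum_div, ← Finset.sum_mul, hat, mul_comm t, mul_div_cancel_of_imp (hb0 · y)]

theorem exists_coupling (hp : IsDist p) (hq : IsDist q) :
    ∃ c : Y × Y → ℝ, IsDist c ∧ (∀ x, ∑ y, c (x, y) = p x) ∧ (∀ y, ∑ x, c (x, y) = q y) ∧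
      ∑ z, c z * mismatch z.1 z.2 ≤ tv p q := by
  classical
  set m : Y → ℝ := fun x => min (p x) (q x)
  have htv : tv p q = 1 - ∑ x, m x := tv_eq_one_sub_sum_min hp hq
  obtain ⟨c, hc, hfst, hsnd⟩ := exists_joint_of_sum_eq (a := fun x => p x - m x)
    (b := fun x => q x - m x) (t := tv p q) (fun x => sub_nonneg.2 (min_le_left _ _))
    (fun x => sub_nonneg.2 (min_le_right _ _)) (by rw [Finset.sum_sub_distrib, hp.2, htv])
    (by rw [Finset.sum_sub_distrib, hq.2, htv])
  have hfst' (x : Y) : ∑ y, ((if x = y then m x else 0) + c (x, y)) = p x := by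
    simp [Finset.sum_add_distrib, hfst]
  have hsnd' (y : Y) : ∑ x, ((if x = y then m x else 0) + c (x, y)) = q y := by
    simp [Finset.sum_add_distrib, hsnd]
  refine ⟨fun z => (if z.1 = z.2 then m z.1 else 0) + c z, ⟨fun z => add_nonneg ?_ (hc z), ?_⟩,
    hfst', hsnd', ?_⟩
  · split_ifs
    exacts [le_min (hp.1 _) (hq.1 _), le_rfl]
  · rw [Fintype.sum_prod_type, Finset.sum_congr rfl fun x _ => hfst' x, hp.2]
  · calc _ ≤ ∑ z, c z := by
          refine Finset.sum_le_sum fun z _ => ?_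
          rcases eq_or_ne z.1 z.2 with h | h
          · simpa [h, mismatch_self] using hc z
          · simp [h, mismatch_of_ne h]
      _ = tv p q := by
          rw [Fintype.sum_prod_type, Finset.sum_congr rfl fun x _ => hfst x,
            Finset.sum_sub_distrib, hp.2, htv]

theorem expectation_sub_le_of_mismatch {ι : Type*} [Fintype ι] [DecidableEq ι] {X : ι → Type}
    [∀ i, Fintype (X i)] {p q : ∀ i, X i → ℝ} (hp : ∀ i, IsDist (p i)) (hq : ∀ i, IsDist (q i))
    {f g : (∀ i, X i) → ℝ} {c : ℝ} {α : ι → ℝ} (hα : ∀ j, 0 ≤ α j)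
    (h : ∀ x y, f x - g y ≤ c + ∑ j, α j * mismatch (x j) (y j)) :
    expectation p f - expectation q g ≤ c + ∑ j, α j * tv (p j) (q j) := by
  classical
  choose K hK hfst hsnd hcost using fun i => exists_coupling (hp i) (hq i)
  have hf : expectation p f = expectation K fun z => f fun i => (z i).1 := by
    rw [← expectation_map K (fun i => Prod.fst) f]
    congr! with i x
    simp [Finset.sum_filter, Fintype.sum_prod_type_right, hfst]
  have hg : expectation q g = expectation K fun z => g fun i => (z i).2 := by
    rw [← expectation_map K (fun i => Prod.snd) g]
    congr! with i y
    simp [Finset.sum_filter, Fintype.sum_prod_type, hsnd]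
  calc expectation p f - expectation q g
      = expectation K fun z => f (fun i => (z i).1) - g fun i => (z i).2 := by
        rw [hf, hg, expectation_sub]
    _ ≤ expectation K fun z => c + ∑ j, α j * mismatch (z j).1 (z j).2 :=
        expectation_mono hK fun z => h _ _
    _ = c + ∑ j, α j * ∑ z, K j z * mismatch z.1 z.2 := by
        simp only [expectation_add, expectation_const hK, expectation_sum, expectation_const_mul,
          expectation_eval hK _ fun z => mismatch z.1 z.2]
    _ ≤ _ := by
        gcongr with j
        exacts [hα j, hcost j]

end TotalVariation

theorem IsDist.nonempty {Y : Type} [Fintype Y] {p : Y → ℝ} (hp : IsDist p) : Nonempty Y := by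
  by_contra h
  rw [not_nonempty_iff] at h
  simpa using hp.2

theorem isDist_single {Y : Type} [Fintype Y] [DecidableEq Y] (a : Y) :
    IsDist (Pi.single a (1 : ℝ)) :=
  single_mem_stdSimplex ℝ a

theorem isDist_update {ι : Type*} [DecidableEq ι] {X : ι → Type} [∀ i, Fintype (X i)]
    {p : ∀ i, X i → ℝ} (hp : ∀ i, IsDist (p i)) (i : ι) {σ : X i → ℝ} (hσ : IsDist σ) (j : ι) :
    IsDist (Function.update p i σ j) := by
  rcases eq_or_ne j i with rfl | h
  · rwa [Function.update_self]
  · rw [Function.update_of_ne h]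
    exact hp j

theorem tv_update_le {ι : Type*} [DecidableEq ι] {X : ι → Type} [∀ i, Fintype (X i)]
    (p q : ∀ i, X i → ℝ) (i : ι) (σ : X i → ℝ) (j : ι) :
    tv (Function.update p i σ j) (Function.update q i σ j) ≤ tv (p j) (q j) := by
  rcases eq_or_ne j i with rfl | h
  · simpa only [Function.update_self, tv_self] using tv_nonneg _ _
  · simp only [Function.update_of_ne h, le_refl]

theorem sum_mul_sub_sum_mul_le_tv {Y : Type} [Fintype Y] {p q : Y → ℝ} (hp : IsDist p)
    (hq : IsDist q) {f : Y → ℝ} {o : ℝ} (hf : ∀ x y, f x - f y ≤ o) :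
    ∑ y, p y * f y - ∑ y, q y * f y ≤ o * tv p q := by
  obtain ⟨y₀⟩ := hp.nonempty
  have ho : 0 ≤ o := by simpa using hf y₀ y₀
  have hmismatch (x y : Y) : f x - f y ≤ o * mismatch x y := by
    rcases eq_or_ne x y with rfl | h
    · simp [mismatch_self]
    · simpa [mismatch_of_ne h] using hf x y
  simpa only [expectation_eval (ι := Unit) (fun _ => hp),
    expectation_eval (ι := Unit) (fun _ => hq), Fintype.sum_unique, zero_add] using
    expectation_sub_le_of_mismatch (ι := Unit) (fun _ => hp) (fun _ => hq)
      (f := fun x => f (x ())) (g := fun x => f (x ())) (c := 0) (α := fun _ => o) (fun _ => ho)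
      fun x y => by simpa using hmismatch (x ()) (y ())

section Softmax

variable {Y : Type} [Fintype Y]

/-- The Shannon entropy, in nats. -/
def entropy (p : Y → ℝ) : ℝ :=
  ∑ y, Real.negMulLog (p y)

/-- The relative entropy of `p` with respect to a positive `q`. -/
def relEntropy (p q : Y → ℝ) : ℝ :=
  ∑ y, q y * InformationTheory.klFun (p y / q y)

/-- The Gibbs distribution of the payoff `q` at temperature `τ`. -/
def softmax (τ : ℝ) (q : Y → ℝ) (a : Y) : ℝ :=
  Real.exp (q a / τ) / ∑ b, Real.exp (q b / τ)

theorem relEntropy_eq {p q : Y → ℝ} (hp : IsDist p) (hq : IsDist q) (hq0 : ∀ y, 0 < q y) :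
    relEntropy p q = -entropy p - ∑ y, p y * Real.log (q y) := by
  have hterm (y : Y) : q y * InformationTheory.klFun (p y / q y) =
      -Real.negMulLog (p y) - p y * Real.log (q y) + (q y - p y) := by
    have hqy := (hq0 y).ne'
    unfold InformationTheory.klFun Real.negMulLog
    rcases (hp.1 y).eq_or_lt with h0 | h0
    · simp [← h0]
    · rw [Real.log_div h0.ne' hqy]
      field_simp
      ring
  simp only [relEntropy, entropy, hterm, Finset.sum_add_distrib, Finset.sum_sub_distrib,
    Finset.sum_neg_distrib, hp.2, hq.2]
  ring

theorem relEntropy_nonneg {p q : Y → ℝ} (hp : IsDist p) (hq : IsDist q) : 0 ≤ relEntropy p q :=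
  Finset.sum_nonneg fun y _ =>
    mul_nonneg (hq.1 y) (InformationTheory.klFun_nonneg (div_nonneg (hp.1 y) (hq.1 y)))

theorem relEntropy_self {p : Y → ℝ} (hp : ∀ y, 0 < p y) : relEntropy p p = 0 :=
  Finset.sum_eq_zero fun y _ => by
    rw [div_self (hp y).ne', InformationTheory.klFun_one, mul_zero]

theorem eq_of_relEntropy_nonpos {p q : Y → ℝ} (hp : IsDist p) (hq : IsDist q) (hq0 : ∀ y, 0 < q y)
    (h : relEntropy p q ≤ 0) : p = q := by
  funext y
  have hratio : 0 ≤ p y / q y := div_nonneg (hp.1 y) (hq.1 y)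
  have hzero := (Finset.sum_eq_zero_iff_of_nonneg fun y _ => mul_nonneg (hq.1 y)
    (InformationTheory.klFun_nonneg (div_nonneg (hp.1 y) (hq.1 y)))).1
    (h.antisymm (relEntropy_nonneg hp hq)) y (Finset.mem_univ y)
  rw [mul_eq_zero, or_iff_right (hq0 y).ne', InformationTheory.klFun_eq_zero_iff hratio,
    div_eq_one_iff_eq (hq0 y).ne'] at hzero
  exact hzero

theorem tv_le_of_log_ratio_osc {p q : Y → ℝ} (hp : IsDist p) (hq : IsDist q) (hp0 : ∀ y, 0 < p y)
    (hq0 : ∀ y, 0 < q y) {o : ℝ}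
    (h : ∀ a b, (Real.log (p a) - Real.log (q a)) - (Real.log (p b) - Real.log (q b)) ≤ o) :
    tv p q ≤ o := by
  have := hp.nonempty
  obtain ⟨b, -, hb⟩ : ∃ b ∈ Finset.univ, p b ≤ q b :=
    Finset.exists_le_of_sum_le Finset.univ_nonempty (hp.2.trans hq.2.symm).le
  have ho : 0 ≤ o := by simpa using h b b
  have hlower (a : Y) : (1 - o) * p a ≤ min (p a) (q a) := by
    have hlog : 1 - (p a / q a)⁻¹ ≤ o := by
      refine (Real.one_sub_inv_le_log_of_pos (div_pos (hp0 a) (hq0 a))).trans ?_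
      rw [Real.log_div (hp0 a).ne' (hq0 a).ne']
      linarith [h a b, Real.log_le_log (hp0 b) hb]
    rw [inv_div, sub_le_comm, le_div_iff₀ (hp0 a)] at hlog
    exact le_min (by nlinarith [hp0 a]) hlog
  have hsum := Finset.sum_le_sum fun a (_ : a ∈ Finset.univ) => hlower a
  rw [← Finset.mul_sum, hp.2] at hsum
  rw [tv_eq_one_sub_sum_min hp hq]
  linarith

variable [Nonempty Y] (τ : ℝ) (q : Y → ℝ)

theorem sum_exp_pos : 0 < ∑ b, Real.exp (q b / τ) :=
  Finset.sum_pos (fun _ _ => Real.exp_pos _) Finset.univ_nonempty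

theorem softmax_pos (a : Y) : 0 < softmax τ q a :=
  div_pos (Real.exp_pos _) (sum_exp_pos τ q)

theorem isDist_softmax : IsDist (softmax τ q) :=
  ⟨fun a => (softmax_pos τ q a).le, by
    simp only [softmax, ← Finset.sum_div, div_self (sum_exp_pos τ q).ne']⟩

variable {τ}

theorem mul_log_softmax (hτ : 0 < τ) (a : Y) :
    τ * Real.log (softmax τ q a) = q a - τ * Real.log (∑ b, Real.exp (q b / τ)) := by
  rw [softmax, Real.log_div (Real.exp_pos _).ne' (sum_exp_pos τ q).ne', Real.log_exp, mul_sub,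
    mul_div_cancel₀ _ hτ.ne']

theorem sum_mul_add_entropy_eq (hτ : 0 < τ) {p : Y → ℝ} (hp : IsDist p) :
    ∑ a, p a * q a + τ * entropy p =
      τ * Real.log (∑ b, Real.exp (q b / τ)) - τ * relEntropy p (softmax τ q) := by
  have hcross : τ * ∑ a, p a * Real.log (softmax τ q a) =
      ∑ a, p a * q a - τ * Real.log (∑ b, Real.exp (q b / τ)) := by
    simp only [Finset.mul_sum, mul_left_comm τ, mul_log_softmax q hτ, mul_sub,
      Finset.sum_sub_distrib, ← Finset.sum_mul, hp.2, one_mul]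
  rw [relEntropy_eq hp (isDist_softmax τ q) (softmax_pos τ q), mul_sub, hcross]
  ring

theorem eq_softmax_of_le (hτ : 0 < τ) {p : Y → ℝ} (hp : IsDist p)
    (h : ∑ a, softmax τ q a * q a + τ * entropy (softmax τ q) ≤ ∑ a, p a * q a + τ * entropy p) :
    p = softmax τ q := by
  rw [sum_mul_add_entropy_eq q hτ (isDist_softmax τ q), sum_mul_add_entropy_eq q hτ hp,
    relEntropy_self (softmax_pos τ q)] at h
  refine eq_of_relEntropy_nonpos hp (isDist_softmax τ q) (softmax_pos τ q) ?_
  exact nonpos_of_mul_nonpos_right (by linarith) hτ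

theorem entropy_sub_entropy_softmax_le (hτ : 0 < τ) {p : Y → ℝ} (hp : IsDist p) {o : ℝ}
    (hq : ∀ a b, q a - q b ≤ o) :
    τ * entropy p - τ * entropy (softmax τ q) ≤ o * tv p (softmax τ q) := by
  have hosc := sum_mul_sub_sum_mul_le_tv (isDist_softmax τ q) hp hq
  have hp_eq := sum_mul_add_entropy_eq q hτ hp
  have hs_eq := sum_mul_add_entropy_eq q hτ (isDist_softmax τ q)
  rw [relEntropy_self (softmax_pos τ q)] at hs_eq
  rw [tv_comm]
  linarith [mul_nonneg hτ.le (relEntropy_nonneg hp (isDist_softmax τ q))]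

theorem tv_softmax_le (hτ : 0 < τ) {q q' : Y → ℝ} {o : ℝ}
    (h : ∀ a b, (q a - q' a) - (q b - q' b) ≤ o) :
    tv (softmax τ q) (softmax τ q') ≤ o / τ := by
  refine tv_le_of_log_ratio_osc (isDist_softmax τ q) (isDist_softmax τ q') (softmax_pos τ q)
    (softmax_pos τ q') fun a b => ?_
  rw [le_div_iff₀' hτ]
  have hlog (q : Y → ℝ) (a : Y) := mul_log_softmax q hτ a
  linarith [h a b, hlog q a, hlog q b, hlog q' a, hlog q' b]

end Softmax

section RegularizedObjective

variable {ι : Type*} [Fintype ι] [DecidableEq ι] {A : ι → Type} [∀ i, Fintype (A i)] {τ : ℝ}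
  {Q Q' : (∀ i, A i) → ℝ} {π : ∀ i, A i → ℝ}

/-- The entropy-regularized payoff of independent randomized actions `π`. -/
def regObjective (τ : ℝ) (Q : (∀ i, A i) → ℝ) (π : ∀ i, A i → ℝ) : ℝ :=
  expectation π Q + τ * ∑ i, entropy (π i)

/-- The payoff of each deterministic action of agent `i` when the others act according to `π`. -/
def actionValue [∀ i, DecidableEq (A i)] (Q : (∀ i, A i) → ℝ) (π : ∀ i, A i → ℝ) (i : ι)
    (a : A i) : ℝ :=
  expectation (Function.update π i (Pi.single a 1)) Q

theorem expectation_log_prod (hπ : ∀ i, IsDist (π i)) :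
    expectation π (fun a => Real.log (∏ i, π i (a i))) = -∑ i, entropy (π i) := by
  have hlog : expectation π (fun a => Real.log (∏ i, π i (a i))) =
      expectation π fun a => ∑ i, Real.log (π i (a i)) := by
    refine Finset.sum_congr rfl fun a _ => ?_
    beta_reduce
    by_cases h : ∃ i, π i (a i) = 0
    · obtain ⟨i, hi⟩ := h
      rw [Finset.prod_eq_zero (Finset.mem_univ i) hi, zero_mul, zero_mul]
    · push Not at h
      rw [Real.log_prod fun i _ => h i]
  rw [hlog, expectation_sum, ← Finset.sum_neg_distrib]
  refine Finset.sum_congr rfl fun i _ => ?_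
  rw [expectation_eval hπ i fun y => Real.log (π i y)]
  simp [entropy, Real.negMulLog]

theorem regObjective_le_add (hπ : ∀ i, IsDist (π i)) {c : ℝ} (h : ∀ a, Q a ≤ Q' a + c) :
    regObjective τ Q π ≤ regObjective τ Q' π + c := by
  have hexp := expectation_mono hπ h
  rw [expectation_add, expectation_const hπ] at hexp
  unfold regObjective
  linarith

theorem regObjective_update [∀ i, DecidableEq (A i)] (τ : ℝ) (Q : (∀ i, A i) → ℝ)
    (π : ∀ i, A i → ℝ) (i : ι) (σ : A i → ℝ) :
    regObjective τ Q (Function.update π i σ) =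
      ∑ a, σ a * actionValue Q π i a + τ * entropy σ +
        τ * ∑ j ∈ Finset.univ.erase i, entropy (π j) := by
  have hothers : ∑ j ∈ Finset.univ.erase i, entropy (Function.update π i σ j) =
      ∑ j ∈ Finset.univ.erase i, entropy (π j) :=
    Finset.sum_congr rfl fun j hj => by rw [Function.update_of_ne (Finset.ne_of_mem_erase hj)]
  rw [regObjective, expectation_update, ← Finset.add_sum_erase _ _ (Finset.mem_univ i),
    Function.update_self, hothers]
  simp only [actionValue]
  ring

variable [∀ i, Nonempty (A i)]

theorem exists_regObjective_max (τ : ℝ) (Q : (∀ i, A i) → ℝ) :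
    ∃ π : ∀ i, A i → ℝ, (∀ i, IsDist (π i)) ∧
      ∀ σ : ∀ i, A i → ℝ, (∀ i, IsDist (σ i)) → regObjective τ Q σ ≤ regObjective τ Q π := by
  classical
  have hcompact : IsCompact (Set.univ.pi fun i => stdSimplex ℝ (A i)) :=
    isCompact_univ_pi fun i => isCompact_stdSimplex ℝ (A i)
  have hnonempty : (Set.univ.pi fun i => stdSimplex ℝ (A i)).Nonempty :=
    ⟨fun i => Pi.single (Classical.arbitrary (A i)) 1, fun i _ => single_mem_stdSimplex ℝ _⟩
  have hcont : Continuous (regObjective τ Q) := by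
    unfold regObjective expectation entropy
    fun_prop
  obtain ⟨π, hπ, hmax⟩ := hcompact.exists_isMaxOn hnonempty hcont.continuousOn
  exact ⟨π, fun i => hπ i (Set.mem_univ i), fun σ hσ => hmax fun i _ => hσ i⟩

/-- A chosen maximizer of the regularized payoff. -/
def regMaximizer (τ : ℝ) (Q : (∀ i, A i) → ℝ) : ∀ i, A i → ℝ :=
  (exists_regObjective_max τ Q).choose

/-- The optimal regularized payoff. -/
def regMax (τ : ℝ) (Q : (∀ i, A i) → ℝ) : ℝ :=
  regObjective τ Q (regMaximizer τ Q)

theorem isDist_regMaximizer (τ : ℝ) (Q : (∀ i, A i) → ℝ) (i : ι) : IsDist (regMaximizer τ Q i) :=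
  (exists_regObjective_max τ Q).choose_spec.1 i

theorem regObjective_le_regMax (τ : ℝ) (Q : (∀ i, A i) → ℝ) (hπ : ∀ i, IsDist (π i)) :
    regObjective τ Q π ≤ regMax τ Q :=
  (exists_regObjective_max τ Q).choose_spec.2 π hπ

theorem regMax_le_add {c : ℝ} (h : ∀ a, Q a ≤ Q' a + c) : regMax τ Q ≤ regMax τ Q' + c :=
  (regObjective_le_add (isDist_regMaximizer τ Q) h).trans
    (by gcongr; exact regObjective_le_regMax τ Q' (isDist_regMaximizer τ Q))

theorem regMaximizer_eq_softmax [∀ i, DecidableEq (A i)] (hτ : 0 < τ) (Q : (∀ i, A i) → ℝ) (i : ι) :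
    regMaximizer τ Q i = softmax τ (actionValue Q (regMaximizer τ Q) i) := by
  set π := regMaximizer τ Q
  set σ := softmax τ (actionValue Q π i)
  have hself : regMax τ Q = regObjective τ Q (Function.update π i (π i)) := by
    rw [Function.update_eq_self]
    rfl
  have hmax := regObjective_le_regMax τ Q
    (isDist_update (isDist_regMaximizer τ Q) i (isDist_softmax τ (actionValue Q π i)))
  rw [hself, regObjective_update, regObjective_update, add_le_add_iff_right] at hmax
  exact eq_softmax_of_le _ hτ (isDist_regMaximizer τ Q i) hmax

end RegularizedObjective

section InfluenceBound

variable {ι Ω : Type*} [Fintype ι] {u : ι → ℝ} {e : Ω → ι → ℝ} {h h' : Ω → ℝ} {B B' : ℝ}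

/-- `h` is at most an affine combination `c + ∑ j, α j * e · j` with nonnegative coefficients whose
cost `c + ∑ j, α j * u j` is at most `B`. When `e` records on which coordinates two configurations
disagree, this bounds the influence of every coordinate at once. -/
def InfluenceBound (u : ι → ℝ) (e : Ω → ι → ℝ) (h : Ω → ℝ) (B : ℝ) : Prop :=
  ∃ (c : ℝ) (α : ι → ℝ), 0 ≤ c ∧ (∀ j, 0 ≤ α j) ∧ (∀ ω, h ω ≤ c + ∑ j, α j * e ω j) ∧
    c + ∑ j, α j * u j ≤ B

namespace InfluenceBound

theorem mono (H : InfluenceBound u e h B) (hh : ∀ ω, h' ω ≤ h ω) (hB : B ≤ B') :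
    InfluenceBound u e h' B' :=
  let ⟨c, α, hc, hα, hle, hcost⟩ := H
  ⟨c, α, hc, hα, fun ω => (hh ω).trans (hle ω), hcost.trans hB⟩

theorem const {c : ℝ} (hc : 0 ≤ c) : InfluenceBound u e (fun _ => c) c :=
  ⟨c, 0, hc, fun _ => le_rfl, fun _ => by simp, by simp⟩

theorem coord (j : ι) : InfluenceBound u e (fun ω => e ω j) (u j) := by
  classical
  exact ⟨0, Pi.single j 1, le_rfl, (Pi.single_nonneg.2 zero_le_one : (0 : ι → ℝ) ≤ Pi.single j 1),
    fun ω => by simp [Pi.single_apply], by simp [Pi.single_apply]⟩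

theorem add (H : InfluenceBound u e h B) (H' : InfluenceBound u e h' B') :
    InfluenceBound u e (fun ω => h ω + h' ω) (B + B') := by
  obtain ⟨c, α, hc, hα, hle, hcost⟩ := H
  obtain ⟨c', α', hc', hα', hle', hcost'⟩ := H'
  refine ⟨c + c', α + α', add_nonneg hc hc', fun j => add_nonneg (hα j) (hα' j),
    fun ω => ?_, ?_⟩ <;>
    simp only [Pi.add_apply, add_mul, Finset.sum_add_distrib]
  · linarith [hle ω, hle' ω]
  · linarith

theorem const_mul {a : ℝ} (ha : 0 ≤ a) (H : InfluenceBound u e h B) :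
    InfluenceBound u e (fun ω => a * h ω) (a * B) := by
  obtain ⟨c, α, hc, hα, hle, hcost⟩ := H
  refine ⟨a * c, fun j => a * α j, mul_nonneg ha hc, fun j => mul_nonneg ha (hα j), fun ω => ?_,
    ?_⟩ <;> simp only [mul_assoc, ← Finset.mul_sum, ← mul_add]
  · exact mul_le_mul_of_nonneg_left (hle ω) ha
  · exact mul_le_mul_of_nonneg_left hcost ha

theorem sum {κ : Type*} (t : Finset κ) {h : κ → Ω → ℝ} {B : κ → ℝ}
    (H : ∀ k ∈ t, InfluenceBound u e (h k) (B k)) :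
    InfluenceBound u e (fun ω => ∑ k ∈ t, h k ω) (∑ k ∈ t, B k) := by
  classical
  induction t using Finset.induction_on with
  | empty => simpa using const le_rfl
  | insert a t ha ih =>
    simp only [Finset.sum_insert ha]
    exact (H a (Finset.mem_insert_self a t)).add
      (ih fun k hk => H k (Finset.mem_insert_of_mem hk))

theorem expect {κ : Type*} {t : Finset κ} (ht : t.Nonempty) {h : κ → Ω → ℝ}
    (H : ∀ k ∈ t, InfluenceBound u e (h k) B) :
    InfluenceBound u e (fun ω => 𝔼 k ∈ t, h k ω) B := by
  have hcard : (0 : ℝ) < t.card := Nat.cast_pos.2 ht.card_pos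
  refine ((sum t H).const_mul (inv_nonneg.2 hcard.le)).mono (fun ω => ?_) ?_
  · rw [Finset.expect_eq_sum_div_card, inv_mul_eq_div]
  · rw [Finset.sum_const, nsmul_eq_mul, inv_mul_cancel_left₀ hcard.ne']

theorem comp_fun {Ω' : Type*} (H : InfluenceBound u e h B) (f : Ω' → Ω) :
    InfluenceBound u (fun ω => e (f ω)) (fun ω => h (f ω)) B :=
  let ⟨c, α, hc, hα, hle, hcost⟩ := H
  ⟨c, α, hc, hα, fun ω => hle (f ω), hcost⟩

theorem transfer {Ω' : Type*} {e' k : Ω' → ι → ℝ} {g : Ω' → ℝ} {a : ℝ}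
    (H : InfluenceBound u e h B) (ha : 1 ≤ a)
    (hk : ∀ j, InfluenceBound u e' (fun ω => k ω j) (a * u j))
    (hg : ∀ (c : ℝ) (α : ι → ℝ), (∀ j, 0 ≤ α j) → (∀ ω, h ω ≤ c + ∑ j, α j * e ω j) →
      ∀ ω, g ω ≤ c + ∑ j, α j * k ω j) :
    InfluenceBound u e' g (a * B) := by
  obtain ⟨c, α, hc, hα, hle, hcost⟩ := H
  refine ((const hc).add (sum Finset.univ fun j _ => (hk j).const_mul (hα j))).mono
    (hg c α hα hle) ?_
  calc c + ∑ j, α j * (a * u j) ≤ a * c + a * ∑ j, α j * u j := by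
        simp only [mul_left_comm _ a, ← Finset.mul_sum]
        gcongr
        exact le_mul_of_one_le_left hc ha
    _ ≤ a * B := by rw [← mul_add]; gcongr

end InfluenceBound

theorem expectation_pair_sub_le {ι : Type*} [Fintype ι] [DecidableEq ι] {S A : ι → Type}
    [∀ i, Fintype (A i)] {Q : (∀ j, S j) → (∀ j, A j) → ℝ} {c : ℝ} {α : ι → ℝ} (hα : ∀ j, 0 ≤ α j)
    (h : ∀ s s' a a', Q s a - Q s' a' ≤
      c + ∑ j, α j * mismatch (s j, a j) (s' j, a' j))
    {p q : ∀ i, A i → ℝ} (hp : ∀ i, IsDist (p i)) (hq : ∀ i, IsDist (q i)) (s s' : ∀ j, S j) :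
    expectation p (Q s) - expectation q (Q s') ≤
      c + ∑ j, α j * (mismatch (s j) (s' j) + tv (p j) (q j)) := by
  have hsplit (a a' : ∀ j, A j) : Q s a - Q s' a' ≤
      (c + ∑ j, α j * mismatch (s j) (s' j)) + ∑ j, α j * mismatch (a j) (a' j) := by
    refine (h s s' a a').trans ?_
    rw [add_assoc, ← Finset.sum_add_distrib]
    gcongr with j
    rw [← mul_add]
    exact mul_le_mul_of_nonneg_left (mismatch_prod_le _ _ _ _) (hα j)
  refine (expectation_sub_le_of_mismatch hp hq hα hsplit).trans_eq ?_
  simp only [add_assoc, mul_add, Finset.sum_add_distrib]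

end InfluenceBound

section SlowlyVarying

variable {ι : Type*} {G : SimpleGraph ι} {R : ι → ℝ} {μ : ℝ}

/-- A length scale for each vertex that changes by at most one along an edge, such as a truncated
distance to a set. It enters through the weight `R j ^ (-μ)`. -/
structure SlowlyVarying (G : SimpleGraph ι) (R : ι → ℝ) : Prop where
  one_le : ∀ i, 1 ≤ R i
  le_add_one : ∀ ⦃i j⦄, G.Adj i j → R i ≤ R j + 1

theorem SlowlyVarying.pos (hR : SlowlyVarying G R) (i : ι) : 0 < R i :=
  zero_lt_one.trans_le (hR.one_le i)

theorem SlowlyVarying.rpow_pos (hR : SlowlyVarying G R) (i : ι) : 0 < R i ^ (-μ) :=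
  Real.rpow_pos_of_pos (hR.pos i) _

theorem slowlyVarying_const {c : ℝ} (hc : 1 ≤ c) : SlowlyVarying G fun _ => c :=
  ⟨fun _ => hc, fun _ _ _ => (lt_add_one c).le⟩

theorem SlowlyVarying.max_one_const_sub (hR : SlowlyVarying G R) (c : ℝ) :
    SlowlyVarying G fun j => max 1 (c - R j) where
  one_le _ := le_max_left _ _
  le_add_one i j hij := by
    rw [max_add]
    exact max_le_max (by norm_num) (by linarith [hR.le_add_one hij.symm])

theorem rpow_neg_le_two_rpow_mul (hμ : 0 ≤ μ) {x y : ℝ} (hx : 0 < x) (h : x ≤ 2 * y) :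
    y ^ (-μ) ≤ 2 ^ μ * x ^ (-μ) := by
  have hy : 0 < y := by linarith
  have hle := Real.rpow_le_rpow_of_nonpos hx h (neg_nonpos.2 hμ)
  rw [Real.mul_rpow zero_le_two hy.le, Real.rpow_neg zero_le_two] at hle
  exact (inv_mul_le_iff₀ (by positivity)).1 hle

end SlowlyVarying

section Decay

variable {ι : Type*} [Fintype ι] {X S A : ι → Type} {G : SimpleGraph ι} {μ b b' θ : ℝ}

/-- The coordinates on which two configurations disagree, as a `0`-`1` vector. -/
def mismatches (ω : (∀ j, X j) × (∀ j, X j)) (j : ι) : ℝ :=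
  mismatch (ω.1 j) (ω.2 j)

/-- Each `f m` depends weakly on the coordinates far from `m`: for every slowly varying scale `R`,
the influences on `f m`, weighted by `R j ^ (-μ)`, are at most `b * R m ^ (-μ)`. -/
def HasDecay (G : SimpleGraph ι) (μ b : ℝ) (f : ι → (∀ j, X j) → ℝ) : Prop :=
  ∀ ⦃R : ι → ℝ⦄, SlowlyVarying G R → ∀ m,
    InfluenceBound (fun j => R j ^ (-μ)) mismatches (fun ω => f m ω.1 - f m ω.2) (b * R m ^ (-μ))

/-- `HasDecay` for functions of a state and an action, where the coordinate of agent `j` is the pair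
of its state and its action. -/
def HasActionDecay (G : SimpleGraph ι) (μ b : ℝ) (Q : ι → (∀ j, S j) → (∀ j, A j) → ℝ) : Prop :=
  HasDecay G μ b fun m (z : ∀ j, S j × A j) => Q m (fun j => (z j).1) fun j => (z j).2

/-- The policies of the agents, in the total variation distance, depend weakly on the states, with
weights `u`. -/
def PolicyDecay [∀ i, Fintype (A i)] (u : ι → ℝ) (θ : ℝ) (ζ : (∀ j, S j) → ∀ i, A i → ℝ) : Prop :=
  ∀ i, InfluenceBound u mismatches (fun ω => tv (ζ ω.1 i) (ζ ω.2 i)) (θ * u i)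

theorem HasDecay.mono {f : ι → (∀ j, X j) → ℝ} (hf : HasDecay G μ b f) (hb : b ≤ b') :
    HasDecay G μ b' f := fun _ hR m =>
  (hf hR m).mono (fun _ => le_rfl) (mul_le_mul_of_nonneg_right hb (hR.rpow_pos m).le)

theorem HasDecay.const_mul {f : ι → (∀ j, X j) → ℝ} (hf : HasDecay G μ b f) {l : ℝ} (hl : 0 ≤ l) :
    HasDecay G μ (l * b) fun m x => l * f m x := fun _ hR m =>
  ((hf hR m).const_mul hl).mono (fun _ => (mul_sub _ _ _).ge) (mul_assoc _ _ _).ge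

theorem HasDecay.expect {κ : Type*} {t : Finset κ} (ht : t.Nonempty) {f : κ → ι → (∀ j, X j) → ℝ}
    (hf : ∀ k ∈ t, HasDecay G μ b (f k)) : HasDecay G μ b fun m x => 𝔼 k ∈ t, f k m x :=
  fun _ hR m => (InfluenceBound.expect ht fun k hk => hf k hk hR m).mono
    (fun _ => (Finset.expect_sub_distrib _ _ _).ge) le_rfl

section Expectation

variable [DecidableEq ι] [∀ i, Fintype (A i)]

theorem InfluenceBound.expectation_sub {Ω : Type*} {u : ι → ℝ} {e : Ω → ι → ℝ}
    {Q : (∀ j, S j) → (∀ j, A j) → ℝ} {B : ℝ} (hθ : 0 ≤ θ)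
    (hQ : InfluenceBound u mismatches (fun ω : (∀ j, S j × A j) × (∀ j, S j × A j) =>
      Q (fun j => (ω.1 j).1) (fun j => (ω.1 j).2) - Q (fun j => (ω.2 j).1) fun j => (ω.2 j).2) B)
    {s s' : Ω → ∀ j, S j} {p q : Ω → ∀ i, A i → ℝ} (hp : ∀ ω i, IsDist (p ω i))
    (hq : ∀ ω i, IsDist (q ω i)) (hs : ∀ j, InfluenceBound u e
      (fun ω => mismatch (s ω j) (s' ω j) + tv (p ω j) (q ω j)) ((1 + θ) * u j)) :
    InfluenceBound u e (fun ω => expectation (p ω) (Q (s ω)) - expectation (q ω) (Q (s' ω)))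
      ((1 + θ) * B) :=
  hQ.transfer (by linarith) hs fun _ _ hα h ω => expectation_pair_sub_le hα
    (fun s s' a a' => h (fun j => (s j, a j), fun j => (s' j, a' j))) (hp ω) (hq ω) (s ω) (s' ω)

theorem HasActionDecay.expectation_policy {Q : ι → (∀ j, S j) → (∀ j, A j) → ℝ}
    (hQ : HasActionDecay G μ b Q) {ζ : (∀ j, S j) → ∀ i, A i → ℝ} (hζ : ∀ s i, IsDist (ζ s i))
    (hθ : 0 ≤ θ) (hdecay : ∀ R, SlowlyVarying G R → PolicyDecay (fun j => R j ^ (-μ)) θ ζ) :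
    HasDecay G μ ((1 + θ) * b) fun m s => expectation (ζ s) (Q m s) := fun R hR m =>
  (InfluenceBound.expectation_sub hθ (hQ hR m) (fun ω => hζ ω.1) (fun ω => hζ ω.2) fun j =>
    ((InfluenceBound.coord j).add (hdecay R hR j)).mono (fun _ => le_rfl)
      (one_add_mul _ _).ge).mono (fun _ => le_rfl) (mul_assoc _ _ _).ge

variable [∀ i, DecidableEq (A i)]

theorem actionValue_sub_le {Q : (∀ j, A j) → ℝ} {π : ∀ i, A i → ℝ} (hπ : ∀ i, IsDist (π i)) {c : ℝ}
    {α : ι → ℝ} (hα : ∀ j, 0 ≤ α j) (h : ∀ x y, Q x - Q y ≤ c + ∑ j, α j * mismatch (x j) (y j))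
    (i : ι) (a a' : A i) : actionValue Q π i a - actionValue Q π i a' ≤ c + α i := by
  refine (expectation_sub_le_of_mismatch (isDist_update hπ i (isDist_single a))
    (isDist_update hπ i (isDist_single a')) hα h).trans ?_
  gcongr
  rw [Fintype.sum_eq_single i fun j hj => by
      simp only [Function.update_of_ne hj, tv_self, mul_zero],
    Function.update_self, Function.update_self]
  exact mul_le_of_le_one_right (hα i) (tv_le_one (isDist_single a) (isDist_single a'))

variable {R : ι → ℝ} {Q : ι → (∀ j, S j) → (∀ j, A j) → ℝ} {ζ : (∀ j, S j) → ∀ i, A i → ℝ}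

theorem HasActionDecay.actionValue_sub_le_of_lt (hQ : HasActionDecay G μ b Q) (hμ : 0 ≤ μ)
    (hb : 0 ≤ b) (hR : SlowlyVarying G R) {π : ∀ i, A i → ℝ} (hπ : ∀ i, IsDist (π i)) {i m : ι}
    (him : 2 * R m < R i) (s : ∀ j, S j) (a a' : A i) :
    actionValue (Q m s) π i a - actionValue (Q m s) π i a' ≤ b * (2 ^ μ * R i ^ (-μ)) := by
  obtain ⟨c, α, _, hα, hle, hcost⟩ := hQ (hR.max_one_const_sub (1 + R i)) m
  have hα_i : α i ≤ ∑ j, α j * max 1 (1 + R i - R j) ^ (-μ) := by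
    refine le_of_eq_of_le ?_ (Finset.single_le_sum
      (f := fun j => α j * max 1 (1 + R i - R j) ^ (-μ))
      (fun j _ => mul_nonneg (hα j) (by positivity)) (Finset.mem_univ i))
    simp
  have hweight : max 1 (1 + R i - R m) ^ (-μ) ≤ 2 ^ μ * R i ^ (-μ) :=
    rpow_neg_le_two_rpow_mul hμ (hR.pos i) (by linarith [le_max_right 1 (1 + R i - R m)])
  have hsame : ∀ x y : ∀ j, A j, Q m s x - Q m s y ≤ c + ∑ j, α j * mismatch (x j) (y j) := by
    intro x y
    refine (hle (fun j => (s j, x j), fun j => (s j, y j))).trans ?_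
    gcongr with j
    · exact hα j
    · simpa only [mismatches, mismatch_self, zero_add] using
        mismatch_prod_le (s j) (s j) (x j) (y j)
  calc _ ≤ c + α i := actionValue_sub_le hπ hα hsame i a a'
    _ ≤ b * max 1 (1 + R i - R m) ^ (-μ) := by linarith
    _ ≤ _ := mul_le_mul_of_nonneg_left hweight hb

theorem HasActionDecay.influenceBound_actionValue_sub (hQ : HasActionDecay G μ b Q)
    (hR : SlowlyVarying G R) (hθ : 0 ≤ θ) (hζ : ∀ s i, IsDist (ζ s i))
    (hdecay : PolicyDecay (fun j => R j ^ (-μ)) θ ζ) (i m : ι) :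
    InfluenceBound (fun j => R j ^ (-μ))
      (fun ω : ((∀ j, S j) × (∀ j, S j)) × A i => mismatches ω.1)
      (fun ω => actionValue (Q m ω.1.1) (ζ ω.1.1) i ω.2 - actionValue (Q m ω.1.2) (ζ ω.1.2) i ω.2)
      ((1 + θ) * (b * R m ^ (-μ))) :=
  InfluenceBound.expectation_sub hθ (hQ hR m)
    (fun ω => isDist_update (hζ ω.1.1) i (isDist_single ω.2))
    (fun ω => isDist_update (hζ ω.1.2) i (isDist_single ω.2)) fun j =>
      ((InfluenceBound.coord j).add ((hdecay j).comp_fun Prod.fst)).mono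
        (fun _ => add_le_add_right (tv_update_le _ _ _ _ _) _) (one_add_mul _ _).ge

/-- Agents `m` with `R m` comparable to `R i` are controlled by the profile `R` itself, the others
by the reflected profile `max 1 (1 + R i - R ·)`, which is large at `m` and equal to one at `i`. -/
theorem HasActionDecay.influenceBound_actionValue_sub_sub (hQ : HasActionDecay G μ b Q)
    (hμ : 0 ≤ μ) (hb : 0 ≤ b) (hR : SlowlyVarying G R) (hθ : 0 ≤ θ) (hζ : ∀ s i, IsDist (ζ s i))
    (hdecay : PolicyDecay (fun j => R j ^ (-μ)) θ ζ) (i m : ι) :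
    InfluenceBound (fun j => R j ^ (-μ))
      (fun ω : ((∀ j, S j) × (∀ j, S j)) × (A i × A i) => mismatches ω.1)
      (fun ω => (actionValue (Q m ω.1.1) (ζ ω.1.1) i ω.2.1 -
          actionValue (Q m ω.1.2) (ζ ω.1.2) i ω.2.1) -
        (actionValue (Q m ω.1.1) (ζ ω.1.1) i ω.2.2 - actionValue (Q m ω.1.2) (ζ ω.1.2) i ω.2.2))
      (2 * (1 + θ) * (b * (2 ^ μ * R i ^ (-μ)))) := by
  have hweight : 0 ≤ b * (2 ^ μ * R i ^ (-μ)) :=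
    mul_nonneg hb (mul_nonneg (by positivity) (hR.rpow_pos i).le)
  rcases le_or_gt (R i) (2 * R m) with hnear | hfar
  · have H := hQ.influenceBound_actionValue_sub hR hθ hζ hdecay i m
    have hswap (ω : (∀ j, S j) × (∀ j, S j)) : mismatches ω.swap = mismatches ω :=
      funext fun _ => mismatch_comm _ _
    have H₂ := H.comp_fun fun ω : ((∀ j, S j) × (∀ j, S j)) × (A i × A i) => (ω.1.swap, ω.2.2)
    simp only [hswap] at H₂
    have H₁ := H.comp_fun fun ω : ((∀ j, S j) × (∀ j, S j)) × (A i × A i) => (ω.1, ω.2.1)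
    refine (H₁.add H₂).mono
      (fun ω => le_of_eq (by simp only [Prod.fst_swap, Prod.snd_swap]; ring)) ?_
    rw [← two_mul, mul_assoc]
    gcongr
    exact rpow_neg_le_two_rpow_mul hμ (hR.pos i) hnear
  · refine (InfluenceBound.const (mul_nonneg zero_le_two hweight)).mono (fun ω => ?_) (by nlinarith)
    linarith [hQ.actionValue_sub_le_of_lt hμ hb hR (hζ ω.1.1) hfar ω.1.1 ω.2.1 ω.2.2,
      hQ.actionValue_sub_le_of_lt hμ hb hR (hζ ω.1.2) hfar ω.1.2 ω.2.2 ω.2.1]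

end Expectation

section Maximizer

theorem expectation_expect [DecidableEq ι] [∀ i, Fintype (A i)] {κ : Type*} (t : Finset κ)
    (p : ∀ i, A i → ℝ) (f : κ → (∀ i, A i) → ℝ) :
    expectation p (fun x => 𝔼 k ∈ t, f k x) = 𝔼 k ∈ t, expectation p (f k) := by
  simp only [Finset.expect_eq_sum_div_card, div_eq_inv_mul, expectation_const_mul, expectation_sum]

theorem InfluenceBound.tv_softmax {Ω : Type*} {Y : Type} [Fintype Y] [Nonempty Y] {u : ι → ℝ}
    {e : Ω → ι → ℝ} {B τ : ℝ} (hτ : 0 < τ) {q q' : Ω → Y → ℝ}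
    (H : InfluenceBound u (fun ω : Ω × (Y × Y) => e ω.1)
      (fun ω => (q ω.1 ω.2.1 - q' ω.1 ω.2.1) - (q ω.1 ω.2.2 - q' ω.1 ω.2.2)) B) :
    InfluenceBound u e (fun ω => tv (softmax τ (q ω)) (softmax τ (q' ω))) (τ⁻¹ * B) := by
  have hmul : InfluenceBound u e (fun ω => τ * tv (softmax τ (q ω)) (softmax τ (q' ω))) B :=
    let ⟨c, α, hc, hα, hle, hcost⟩ := H
    ⟨c, α, hc, hα, fun ω => (le_div_iff₀' hτ).1 (tv_softmax_le hτ fun a b => hle (ω, (a, b))),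
      hcost⟩
  exact (hmul.const_mul (inv_nonneg.2 hτ.le)).mono
    (fun ω => (inv_mul_cancel_left₀ hτ.ne' _).ge) le_rfl

theorem exists_policyDecay [∀ i, Fintype (A i)] {u : ι → ℝ} (hu : ∀ i, 0 < u i)
    {ζ : (∀ j, S j) → ∀ i, A i → ℝ} (hζ : ∀ s i, IsDist (ζ s i)) :
    ∃ N : ℕ, PolicyDecay u (N + 1 : ℝ) ζ := by
  obtain ⟨N, hN⟩ := exists_nat_ge (∑ i, (u i)⁻¹)
  refine ⟨N, fun i => (InfluenceBound.const zero_le_one).mono (fun ω => tv_le_one (hζ _ _) (hζ _ _))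
    ?_⟩
  have hi : (u i)⁻¹ ≤ N + 1 := ((Finset.single_le_sum (f := fun i => (u i)⁻¹)
    (fun j _ => (inv_pos.2 (hu j)).le) (Finset.mem_univ i)).trans hN).trans (lt_add_one _).le
  exact (inv_le_iff_one_le_mul₀ (hu i)).1 hi

variable [DecidableEq ι] [∀ i, Fintype (A i)] [∀ i, Nonempty (A i)] {τ : ℝ} {R : ι → ℝ}
  {Q : ι → (∀ j, S j) → (∀ j, A j) → ℝ}

theorem HasActionDecay.policyDecay_step (hQ : HasActionDecay G μ b Q) (hμ : 0 ≤ μ) (hb : 0 ≤ b)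
    (hτ : 0 < τ) (hbτ : 32 * b * 2 ^ μ ≤ τ) (hR : SlowlyVarying G R) (hθ : 0 ≤ θ)
    (h : PolicyDecay (fun j => R j ^ (-μ)) θ fun s => regMaximizer τ fun a => 𝔼 m, Q m s a) :
    PolicyDecay (fun j => R j ^ (-μ)) ((1 + θ) / 16)
      fun s => regMaximizer τ fun a => 𝔼 m, Q m s a := by
  classical
  intro i
  have : Nonempty ι := ⟨i⟩
  simp only [regMaximizer_eq_softmax hτ _ i]
  refine (InfluenceBound.tv_softmax hτ ((InfluenceBound.expect Finset.univ_nonempty fun m _ =>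
    hQ.influenceBound_actionValue_sub_sub hμ hb hR hθ (fun s => isDist_regMaximizer τ _) h i m).mono
      (fun ω => le_of_eq ?_) le_rfl)).mono (fun _ => le_rfl) ?_
  · simp only [actionValue, expectation_expect, Finset.expect_sub_distrib]
  · rw [inv_mul_le_iff₀ hτ]
    have hw : 0 ≤ (1 + θ) * R i ^ (-μ) := mul_nonneg (by linarith) (hR.rpow_pos i).le
    nlinarith [mul_le_mul_of_nonneg_right hbτ hw]

theorem HasActionDecay.policyDecay (hQ : HasActionDecay G μ b Q) (hμ : 0 ≤ μ) (hb : 0 ≤ b)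
    (hτ : 0 < τ) (hbτ : 32 * b * 2 ^ μ ≤ τ) (hR : SlowlyVarying G R) :
    PolicyDecay (fun j => R j ^ (-μ)) (1 / 8) fun s => regMaximizer τ fun a => 𝔼 m, Q m s a := by
  have step {θ θ' : ℝ} (hθ : 0 ≤ θ) (hθ' : (1 + θ) / 16 ≤ θ')
      (h : PolicyDecay (fun j => R j ^ (-μ)) θ fun s => regMaximizer τ fun a => 𝔼 m, Q m s a) :
      PolicyDecay (fun j => R j ^ (-μ)) θ' fun s => regMaximizer τ fun a => 𝔼 m, Q m s a :=
    fun i => (hQ.policyDecay_step hμ hb hτ hbτ hR hθ h i).mono (fun _ => le_rfl)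
      (mul_le_mul_of_nonneg_right hθ' (hR.rpow_pos i).le)
  obtain ⟨N, hN⟩ := exists_policyDecay (u := fun j => R j ^ (-μ)) (fun j => hR.rpow_pos j)
    fun s => isDist_regMaximizer τ fun a => 𝔼 m, Q m s a
  refine step zero_le_one (by norm_num) ?_
  induction N with
  | zero => simpa using hN
  | succ N ih =>
    refine ih (step (by positivity) ?_ hN)
    push_cast
    linarith [(Nat.cast_nonneg N : (0 : ℝ) ≤ N)]

end Maximizer

end Decay

section Kernel

theorem le_sum_mul_mismatch {ι : Type*} [Fintype ι] [DecidableEq ι] {X : ι → Type*}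
    {d : (∀ i, X i) → (∀ i, X i) → ℝ} (hself : ∀ x, d x x = 0)
    (htri : ∀ x y z, d x z ≤ d x y + d y z) {c : ι → ℝ}
    (hc : ∀ x j y, d x (Function.update x j y) ≤ c j) (x y : ∀ i, X i) :
    d x y ≤ ∑ j, c j * mismatch (x j) (y j) := by
  have hpartial (t : Finset ι) : d x (t.piecewise y x) ≤ ∑ j ∈ t, c j * mismatch (x j) (y j) := by
    induction t using Finset.induction_on with
    | empty => simp [hself]
    | insert j t hj ih =>
      rw [Finset.sum_insert hj, Finset.piecewise_insert]
      rcases eq_or_ne (x j) (y j) with hxy | hxy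
      · have hsame : Function.update (t.piecewise y x) j (y j) = t.piecewise y x := by
          rw [Function.update_eq_self_iff, Finset.piecewise_eq_of_notMem _ _ _ hj, hxy]
        simpa [hsame, hxy, mismatch_self] using ih
      · rw [mismatch_of_ne hxy]
        linarith [htri x (t.piecewise y x) (Function.update (t.piecewise y x) j (y j)),
          hc (t.piecewise y x) j (y j)]
  simpa only [Finset.piecewise_univ] using hpartial Finset.univ

section LocalKernel

variable {ι : Type*} [Fintype ι] {S A : ι → Type} [∀ i, Fintype (S i)] {G : SimpleGraph ι}
  {P : ∀ i : ι, (∀ j, S j) → A i → S i → ℝ} {r : ∀ i, S i → A i → ℝ} {μ b γ rbar : ℝ}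

/-- The local transition kernels do not amplify weighted influences, at any slowly varying scale. -/
def KernelDecay (G : SimpleGraph ι) (μ : ℝ) (P : ∀ i : ι, (∀ j, S j) → A i → S i → ℝ) : Prop :=
  ∀ ⦃R : ι → ℝ⦄, SlowlyVarying G R → ∀ i,
    InfluenceBound (fun j => R j ^ (-μ)) mismatches
      (fun ω : (∀ j, S j × A j) × (∀ j, S j × A j) =>
        tv (P i (fun j => (ω.1 j).1) (ω.1 i).2) (P i (fun j => (ω.2 j).1) (ω.2 i).2)) (R i ^ (-μ))

variable [DecidableEq ι]

/-- The average reward of the agents plus the discounted expectation of `W` at the next state. -/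
def lookahead (γ : ℝ) (P : ∀ i : ι, (∀ j, S j) → A i → S i → ℝ) (r : ∀ i, S i → A i → ℝ)
    (W : (∀ j, S j) → ℝ) (s : ∀ j, S j) (a : ∀ j, A j) : ℝ :=
  𝔼 i, r i (s i) (a i) + γ * expectation (fun i => P i s (a i)) W

/-- The contribution of agent `m` to the lookahead, when `V m` is its continuation value. -/
def localLookahead (γ : ℝ) (P : ∀ i : ι, (∀ j, S j) → A i → S i → ℝ) (r : ∀ i, S i → A i → ℝ)
    (V : ι → (∀ j, S j) → ℝ) (m : ι) (s : ∀ j, S j) (a : ∀ j, A j) : ℝ :=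
  r m (s m) (a m) + γ * expectation (fun i => P i s (a i)) (V m)

theorem expect_localLookahead (V : ι → (∀ j, S j) → ℝ) (s : ∀ j, S j) (a : ∀ j, A j) :
    𝔼 m, localLookahead γ P r V m s a = lookahead γ P r (fun s => 𝔼 m, V m s) s a := by
  simp only [localLookahead, lookahead, Finset.expect_add_distrib, ← Finset.mul_expect,
    expectation_expect]

theorem lookahead_le_add (hP : ∀ i s a, IsDist (P i s a)) (hγ : 0 ≤ γ) {W W' : (∀ j, S j) → ℝ}
    {c : ℝ} (h : ∀ s, W s ≤ W' s + c) (s : ∀ j, S j) (a : ∀ j, A j) :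
    lookahead γ P r W s a ≤ lookahead γ P r W' s a + γ * c := by
  have hexp := expectation_mono (fun i => hP i s (a i)) h
  rw [expectation_add, expectation_const fun i => hP i s (a i)] at hexp
  unfold lookahead
  nlinarith

theorem KernelDecay.hasActionDecay_localLookahead (hPdecay : KernelDecay G μ P)
    (hP : ∀ i s a, IsDist (P i s a)) (hr : ∀ i x a, 0 ≤ r i x a ∧ r i x a ≤ rbar)
    (hrbar : 0 ≤ rbar) (hγ : 0 ≤ γ) {V : ι → (∀ j, S j) → ℝ} (hV : HasDecay G μ b V) :
    HasActionDecay G μ (rbar + γ * b) (localLookahead γ P r V) := by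
  intro R hR m
  have hreward : InfluenceBound (fun j => R j ^ (-μ)) mismatches
      (fun ω : (∀ j, S j × A j) × (∀ j, S j × A j) =>
        r m (ω.1 m).1 (ω.1 m).2 - r m (ω.2 m).1 (ω.2 m).2) (rbar * R m ^ (-μ)) := by
    refine ((InfluenceBound.coord m).const_mul hrbar).mono (fun ω => ?_) le_rfl
    rcases eq_or_ne (ω.1 m) (ω.2 m) with h | h
    · simp [mismatches, h, mismatch_self]
    · simp only [mismatches, mismatch_of_ne h, mul_one]
      linarith [(hr m (ω.1 m).1 (ω.1 m).2).2, (hr m (ω.2 m).1 (ω.2 m).2).1]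
  have hfuture : InfluenceBound (fun j => R j ^ (-μ)) mismatches
      (fun ω : (∀ j, S j × A j) × (∀ j, S j × A j) =>
        expectation (fun i => P i (fun j => (ω.1 j).1) (ω.1 i).2) (V m) -
          expectation (fun i => P i (fun j => (ω.2 j).1) (ω.2 i).2) (V m)) (1 * (b * R m ^ (-μ))) :=
    (hV hR m).transfer le_rfl
      (fun i => (hPdecay hR i).mono (fun _ => le_rfl) (one_mul _).ge) fun c α hα h ω =>
        expectation_sub_le_of_mismatch (fun i => hP i _ _) (fun i => hP i _ _) hα
          fun x y => h (x, y)
  refine (hreward.add (hfuture.const_mul hγ)).mono (fun ω => le_of_eq ?_) (le_of_eq ?_)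
  · simp only [localLookahead]
    ring
  · ring

end LocalKernel

section InteractionMatrix

variable {n : ℕ} {S A : Fin n → Type} [∀ i, Fintype (S i)] (G : SimpleGraph (Fin n))
  [DecidableRel G.Adj] (P : ∀ i : Fin n, (∀ j, S j) → A i → S i → ℝ)

theorem Cmat_nonneg (i j : Fin n) : 0 ≤ Cmat G P i j := by
  unfold Cmat
  split_ifs
  · exact Real.iSup_nonneg fun _ => Real.iSup_nonneg fun _ => Real.iSup_nonneg fun _ =>
      Real.iSup_nonneg fun _ => tv_nonneg _ _
  · exact Real.iSup_nonneg fun _ => Real.iSup_nonneg fun _ => Real.iSup_nonneg fun _ =>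
      tv_nonneg _ _
  · exact le_rfl

variable {P}

theorem sum_Cmat_mul_rpow_le {μ : ℝ} (hμ : 0 ≤ μ) {i : Fin n}
    (hC : 2 ^ μ * ∑ j, Cmat G P i j ≤ 1) {R : Fin n → ℝ} (hR : SlowlyVarying G R) :
    ∑ j, Cmat G P i j * R j ^ (-μ) ≤ R i ^ (-μ) := by
  have hterm (j : Fin n) : Cmat G P i j * R j ^ (-μ) ≤ Cmat G P i j * (2 ^ μ * R i ^ (-μ)) := by
    by_cases hnbr : j = i ∨ G.Adj i j
    · refine mul_le_mul_of_nonneg_left (rpow_neg_le_two_rpow_mul hμ (hR.pos i) ?_)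
        (Cmat_nonneg G P i j)
      rcases hnbr with rfl | h
      · linarith [hR.pos j]
      · linarith [hR.le_add_one h, hR.one_le j]
    · rw [not_or] at hnbr
      simp [Cmat, hnbr]
  calc _ ≤ ∑ j, Cmat G P i j * (2 ^ μ * R i ^ (-μ)) := Finset.sum_le_sum fun j _ => hterm j
    _ = (2 ^ μ * ∑ j, Cmat G P i j) * R i ^ (-μ) := by rw [← Finset.sum_mul]; ring
    _ ≤ R i ^ (-μ) := mul_le_of_le_one_left (hR.rpow_pos i).le hC

variable [∀ i, Finite (A i)]

theorem tv_update_le_Cmat_self (i : Fin n) (s : ∀ k, S k) (y : S i) (a a' : A i) :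
    tv (P i s a) (P i (Function.update s i y) a') ≤ Cmat G P i i := by
  rw [Cmat, if_pos rfl]
  refine le_ciSup_of_le (Set.finite_range _).bddAbove s ?_
  refine le_ciSup_of_le (Set.finite_range _).bddAbove y ?_
  refine le_ciSup_of_le (Set.finite_range _).bddAbove a ?_
  exact le_ciSup_of_le (Set.finite_range _).bddAbove a' le_rfl

theorem tv_update_le_Cmat (hloc : IsLocalKernel G P) {i j : Fin n} (hij : j ≠ i) (s : ∀ k, S k)
    (y : S j) (a : A i) : tv (P i s a) (P i (Function.update s j y) a) ≤ Cmat G P i j := by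
  rw [Cmat, if_neg hij]
  split_ifs with hadj
  · refine le_ciSup_of_le (Set.finite_range _).bddAbove s ?_
    refine le_ciSup_of_le (Set.finite_range _).bddAbove y ?_
    exact le_ciSup_of_le (Set.finite_range _).bddAbove a le_rfl
  · refine le_of_eq ?_
    rw [← hloc i s (Function.update s j y) (fun k hk => ?_) a, tv_self]
    have hkj : k ≠ j := by
      rintro rfl
      exact hk.elim hij hadj
    rw [Function.update_of_ne hkj]

theorem tv_kernel_le_sum_Cmat (hloc : IsLocalKernel G P) (i : Fin n) (x y : ∀ j, S j × A j) :
    tv (P i (fun j => (x j).1) (x i).2) (P i (fun j => (y j).1) (y i).2) ≤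
      ∑ j, Cmat G P i j * mismatch (x j) (y j) := by
  refine le_sum_mul_mismatch (d := fun x y : ∀ j, S j × A j =>
    tv (P i (fun j => (x j).1) (x i).2) (P i (fun j => (y j).1) (y i).2)) (fun x => tv_self _)
    (fun _ _ _ => tv_triangle _ _ _) (fun x j z => ?_) x y
  have hstate : (fun k => (Function.update x j z k).1) = Function.update (fun k => (x k).1) j z.1 :=
    funext fun k => Function.apply_update (fun _ => Prod.fst) x j z k
  simp only [hstate]
  rcases eq_or_ne j i with rfl | h
  · exact tv_update_le_Cmat_self G j _ _ _ _
  · rw [Function.update_of_ne h.symm]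
    exact tv_update_le_Cmat G hloc h _ _ _

theorem kernelDecay_of_sum_Cmat_le (hloc : IsLocalKernel G P) {μ : ℝ} (hμ : 0 ≤ μ)
    (hC : ∀ i, 2 ^ μ * ∑ j, Cmat G P i j ≤ 1) : KernelDecay G μ P := fun _ hR i =>
  ⟨0, Cmat G P i, le_rfl, Cmat_nonneg G P i,
    fun ω => (tv_kernel_le_sum_Cmat G hloc i ω.1 ω.2).trans_eq (zero_add _).symm,
    (zero_add _).trans_le (sum_Cmat_mul_rpow_le G hμ (hC i) hR)⟩

end InteractionMatrix

end Kernel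

section FixedPoint

open Filter Topology

theorem tendsto_expect_of_subgradient {Φ E : ℝ → ℝ} (h : ∀ x y, Φ x + (y - x) * E x ≤ Φ y) :
    Tendsto (fun N : ℕ => 𝔼 k ∈ Finset.range N, E ((k + 1 : ℕ) / N)) atTop (𝓝 (Φ 1 - Φ 0)) := by
  have hbounds (N : ℕ) (hN : 0 < N) :
      Φ 1 - Φ 0 ≤ 𝔼 k ∈ Finset.range N, E ((k + 1 : ℕ) / N) ∧
      𝔼 k ∈ Finset.range N, E ((k + 1 : ℕ) / N) ≤ Φ 1 - Φ 0 + (E 1 - E 0) / N := by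
    have hN' : (N : ℝ) ≠ 0 := Nat.cast_ne_zero.2 hN.ne'
    have hwidth (k : ℕ) : ((k + 1 : ℕ) : ℝ) / N - k / N = (N : ℝ)⁻¹ := by
      push_cast
      field_simp
      ring
    have hΦ := Finset.sum_range_sub (fun k : ℕ => Φ (k / N)) N
    have hE := Finset.sum_range_sub (fun k : ℕ => E (k / N)) N
    simp only [div_self hN', Nat.cast_zero, zero_div] at hΦ hE
    rw [← hΦ, ← hE, Finset.expect_eq_sum_div_card, Finset.card_range, Finset.sum_div,
      Finset.sum_div, ← Finset.sum_add_distrib]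
    refine ⟨Finset.sum_le_sum fun k _ => ?_, Finset.sum_le_sum fun k _ => ?_⟩
    · have := h ((k + 1 : ℕ) / N) (k / N)
      rw [← neg_sub, hwidth, neg_mul, inv_mul_eq_div] at this
      linarith
    · have := h (k / N) ((k + 1 : ℕ) / N)
      rw [hwidth, inv_mul_eq_div] at this
      linarith [sub_div (E ((k + 1 : ℕ) / N)) (E (k / N)) N]
  have herr : Tendsto (fun N : ℕ => Φ 1 - Φ 0 + (E 1 - E 0) / N) atTop (𝓝 (Φ 1 - Φ 0)) := by
    simpa using (tendsto_const_div_atTop_nhds_zero_nat (E 1 - E 0)).const_add (Φ 1 - Φ 0)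
  refine tendsto_of_tendsto_of_tendsto_of_le_of_le' tendsto_const_nhds herr ?_ ?_ <;>
    filter_upwards [eventually_gt_atTop 0] with N hN
  exacts [(hbounds N hN).1, (hbounds N hN).2]

theorem exists_dist_apply_le_of_contractingWith {E : Type*} [MetricSpace E]
    [CompleteSpace E] {K : NNReal} {f : E → E} (hf : ContractingWith K f) {s : Set E}
    (hs : s.Nonempty) (hmaps : Set.MapsTo f s (closure s)) {ε : ℝ} (hε : 0 < ε) :
    ∃ x ∈ s, dist (f x) x ≤ ε := by
  obtain ⟨x₀, hx₀⟩ := hs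
  have : Nonempty E := ⟨x₀⟩
  have hmaps' : Set.MapsTo f (closure s) (closure s) := by
    simpa only [closure_closure] using hmaps.closure hf.toLipschitzWith.continuous
  have hfix : ContractingWith.fixedPoint f hf ∈ closure s :=
    isClosed_closure.mem_of_tendsto (hf.tendsto_iterate_fixedPoint x₀)
      (Eventually.of_forall fun N => hmaps'.iterate N (subset_closure hx₀))
  obtain ⟨x, hx, hdist⟩ := Metric.mem_closure_iff.1 hfix (ε / 2) (half_pos hε)
  refine ⟨x, hx, ?_⟩
  have hcontr := hf.toLipschitzWith.dist_le_mul x (ContractingWith.fixedPoint f hf)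
  rw [hf.fixedPoint_isFixedPt] at hcontr
  have hK : (K : ℝ) ≤ 1 := hf.one_sub_K_pos.le |> sub_nonneg.1
  rw [dist_comm] at hdist
  have htri := dist_triangle_right (f x) x (ContractingWith.fixedPoint f hf)
  nlinarith [dist_nonneg (x := x) (y := ContractingWith.fixedPoint f hf)]

variable {ι : Type*} [Fintype ι] [DecidableEq ι] {S A : ι → Type} [∀ i, Fintype (A i)]
  [∀ i, Nonempty (A i)] {τ : ℝ}

theorem regMax_subgradient (τ : ℝ) (Q : (∀ i, A i) → ℝ) (l l' : ℝ) :
    regMax τ (fun a => l * Q a) +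
        (l' - l) * expectation (regMaximizer τ fun a => l * Q a) Q ≤
      regMax τ fun a => l' * Q a := by
  refine le_of_eq_of_le ?_ (regObjective_le_regMax τ (fun a => l' * Q a)
    (isDist_regMaximizer τ fun a => l * Q a))
  simp only [regMax, regObjective, expectation_const_mul]
  ring

variable [∀ i, Fintype (S i)] {P : ∀ i : ι, (∀ j, S j) → A i → S i → ℝ} {r : ∀ i, S i → A i → ℝ}
  {γ : ℝ}

/-- The entropy-regularized Bellman optimality operator, shifted by the constant that it takes as
value when there are no rewards. The shift does not change oscillations, and it keeps the iterates
in the class of averages of functions with decay. -/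
def softBellman (γ τ : ℝ) (P : ∀ i : ι, (∀ j, S j) → A i → S i → ℝ) (r : ∀ i, S i → A i → ℝ)
    (W : (∀ j, S j) → ℝ) (s : ∀ j, S j) : ℝ :=
  regMax τ (lookahead γ P r W s) - regMax τ fun _ : ∀ i, A i => (0 : ℝ)

theorem contractingWith_softBellman (hP : ∀ i s a, IsDist (P i s a)) (hγ0 : 0 ≤ γ) (hγ1 : γ < 1) :
    ContractingWith ⟨γ, hγ0⟩ (softBellman γ τ P r) := by
  refine ⟨hγ1, LipschitzWith.of_dist_le_mul fun W W' => ?_⟩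
  have hle (W W' : (∀ j, S j) → ℝ) (s : ∀ j, S j) :
      softBellman γ τ P r W s ≤ softBellman γ τ P r W' s + γ * dist W W' := by
    have hdist (s : ∀ j, S j) : W s ≤ W' s + dist W W' :=
      sub_le_iff_le_add'.1 ((le_abs_self _).trans (dist_le_pi_dist W W' s))
    have := regMax_le_add (τ := τ) (lookahead_le_add hP hγ0 (r := r) hdist s)
    unfold softBellman
    linarith
  refine (dist_pi_le_iff (mul_nonneg hγ0 dist_nonneg)).2 fun s => abs_sub_le_iff.2 ⟨?_, ?_⟩
  · exact sub_le_iff_le_add'.2 (hle W W' s)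
  · rw [dist_comm]
    exact sub_le_iff_le_add'.2 (hle W' W s)

variable {G : SimpleGraph ι} {μ b rbar : ℝ}

/-- Averages over the agents of local functions with decay `b`. -/
def decayAverages (G : SimpleGraph ι) (μ b : ℝ) : Set ((∀ j, S j) → ℝ) :=
  {W | ∃ V : ι → (∀ j, S j) → ℝ, HasDecay G μ b V ∧ W = fun s => 𝔼 m, V m s}

/-- Differentiating in the size `l` of the payoff writes the Bellman operator as an integral of
expected payoffs under regularized maximizers, whose policies decay at the same rate for all `l`. -/
theorem mapsTo_softBellman_decayAverages (hPdecay : KernelDecay G μ P)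
    (hP : ∀ i s a, IsDist (P i s a)) (hr : ∀ i x a, 0 ≤ r i x a ∧ r i x a ≤ rbar)
    (hrbar : 0 ≤ rbar) (hγ : 0 ≤ γ) (hμ : 0 ≤ μ) (hb : 0 ≤ b) (hτ : 0 < τ)
    (hbb : 9 / 8 * (rbar + γ * b) ≤ b) (hbτ : 32 * (rbar + γ * b) * 2 ^ μ ≤ τ) :
    Set.MapsTo (softBellman γ τ P r) (decayAverages G μ b) (closure (decayAverages G μ b)) := by
  rintro _ ⟨V, hV, rfl⟩
  set Q := localLookahead γ P r V
  have hQ : HasActionDecay G μ (rbar + γ * b) Q :=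
    hPdecay.hasActionDecay_localLookahead hP hr hrbar hγ hV
  let π (l : ℝ) (s : ∀ j, S j) : ∀ i, A i → ℝ := regMaximizer τ fun a => l * 𝔼 m, Q m s a
  have hlim (s : ∀ j, S j) := tendsto_expect_of_subgradient
    (regMax_subgradient τ fun a => 𝔼 m, Q m s a)
  have hdecay (l : ℝ) (hl0 : 0 ≤ l) (hl1 : l ≤ 1) :
      HasDecay G μ b fun m s => expectation (π l s) (Q m s) := by
    have hB : 0 ≤ rbar + γ * b := by positivity
    have hlQ : HasActionDecay G μ (rbar + γ * b) fun m s a => l * Q m s a :=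
      (HasDecay.const_mul hQ hl0).mono (mul_le_of_le_one_left hB hl1)
    refine (hQ.expectation_policy (θ := 1 / 8) (fun s => isDist_regMaximizer τ _) (by norm_num)
      fun R hR => ?_).mono (by linarith)
    simpa only [π, Finset.mul_expect] using hlQ.policyDecay hμ hB hτ hbτ hR
  refine mem_closure_of_tendsto (b := atTop) (f := fun (N : ℕ) s =>
    𝔼 m, 𝔼 k ∈ Finset.range N, expectation (π ((k + 1 : ℕ) / N) s) (Q m s))
    (tendsto_pi_nhds.2 fun s => ?_) ?_
  · convert hlim s using 2 with N
    · rw [Finset.expect_comm]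
      simp only [π, expectation_expect]
    · simp only [softBellman, Q, one_mul, zero_mul, expect_localLookahead]
  · filter_upwards [eventually_gt_atTop 0] with N hN
    refine ⟨_, HasDecay.expect (Finset.nonempty_range_iff.2 hN.ne') fun k hk => hdecay _ ?_ ?_, rfl⟩
    · positivity
    · rw [div_le_one (by positivity)]
      exact_mod_cast Finset.mem_range.1 hk

theorem exists_hasDecay_abs_softBellman_sub_le (hPdecay : KernelDecay G μ P)
    (hP : ∀ i s a, IsDist (P i s a)) (hr : ∀ i x a, 0 ≤ r i x a ∧ r i x a ≤ rbar)
    (hrbar : 0 ≤ rbar) (hγ0 : 0 ≤ γ) (hγ1 : γ < 1) (hμ : 0 ≤ μ) (hb : 0 ≤ b) (hτ : 0 < τ)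
    (hbb : 9 / 8 * (rbar + γ * b) ≤ b) (hbτ : 32 * (rbar + γ * b) * 2 ^ μ ≤ τ) {ε : ℝ}
    (hε : 0 < ε) : ∃ V : ι → (∀ j, S j) → ℝ, HasDecay G μ b V ∧
      ∀ s, |softBellman γ τ P r (fun s => 𝔼 m, V m s) s - 𝔼 m, V m s| ≤ ε := by
  have hzero : (decayAverages G μ b : Set ((∀ j, S j) → ℝ)).Nonempty :=
    ⟨_, 0, fun R hR m => (InfluenceBound.const (mul_nonneg hb (hR.rpow_pos m).le)).mono
      (fun _ => by simpa using mul_nonneg hb (hR.rpow_pos m).le) le_rfl, rfl⟩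
  obtain ⟨_, ⟨V, hV, rfl⟩, hdist⟩ := exists_dist_apply_le_of_contractingWith
    (contractingWith_softBellman (τ := τ) (r := r) hP hγ0 hγ1) hzero
    (mapsTo_softBellman_decayAverages hPdecay hP hr hrbar hγ0 hμ hb hτ hbb hbτ) hε
  exact ⟨V, hV, (dist_pi_le_iff hε.le).1 hdist⟩

end FixedPoint

section Value

theorem summable_discounted_pow_mulVec {Ω : Type*} [Fintype Ω] [DecidableEq Ω] {M : Matrix Ω Ω ℝ}
    (hM : M ∈ Matrix.rowStochastic ℝ Ω) {γ : ℝ} (hγ0 : 0 ≤ γ) (hγ1 : γ < 1) (g : Ω → ℝ) (x : Ω) :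
    Summable fun t : ℕ => γ ^ t * (M ^ t).mulVec g x := by
  refine .of_norm_bounded ((summable_geometric_of_lt_one hγ0 hγ1).mul_right (∑ y, |g y|))
    fun t => ?_
  have hMt := pow_mem hM t
  rw [Real.norm_eq_abs, abs_mul, abs_of_nonneg (pow_nonneg hγ0 t)]
  refine mul_le_mul_of_nonneg_left ?_ (pow_nonneg hγ0 t)
  refine (Finset.abs_sum_le_sum_abs _ _).trans (Finset.sum_le_sum fun y _ => ?_)
  rw [abs_mul, abs_of_nonneg (Matrix.nonneg_of_mem_rowStochastic hMt)]
  exact mul_le_of_le_one_left (abs_nonneg _) (Matrix.le_one_of_mem_rowStochastic hMt)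

theorem tsum_discounted_pow_mulVec {Ω : Type*} [Fintype Ω] [DecidableEq Ω] {M : Matrix Ω Ω ℝ}
    (hM : M ∈ Matrix.rowStochastic ℝ Ω) {γ : ℝ} (hγ0 : 0 ≤ γ) (hγ1 : γ < 1) (g : Ω → ℝ) (x : Ω) :
    ∑' t : ℕ, γ ^ t * (M ^ t).mulVec g x =
      g x + γ * M.mulVec (fun y => ∑' t : ℕ, γ ^ t * (M ^ t).mulVec g y) x := by
  have hsummable := summable_discounted_pow_mulVec hM hγ0 hγ1 g
  have hstep (t : ℕ) : γ ^ (t + 1) * (M ^ (t + 1)).mulVec g x =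
      γ * ∑ y, M x y * (γ ^ t * (M ^ t).mulVec g y) := by
    rw [pow_succ' M, ← Matrix.mulVec_mulVec, Matrix.mulVec, dotProduct]
    simp only [pow_succ', Finset.mul_sum, mul_assoc, mul_left_comm]
  rw [(hsummable x).tsum_eq_zero_add, tsum_congr hstep, tsum_mul_left,
    Summable.tsum_finsetSum fun y _ => (hsummable y).mul_left (M x y)]
  simp only [tsum_mul_left, pow_zero, one_mul, Matrix.one_mulVec]
  rfl

theorem le_div_one_sub_of_forall_le {Ω : Type*} [Finite Ω] {f : Ω → ℝ} {γ ε : ℝ} (hγ : γ < 1)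
    (h : ∀ c, (∀ x, f x ≤ c) → ∀ x, f x ≤ γ * c + ε) (x : Ω) : f x ≤ ε / (1 - γ) := by
  have : Nonempty Ω := ⟨x⟩
  obtain ⟨y, hy⟩ := Finite.exists_max f
  refine (hy x).trans ((le_div_iff₀ (sub_pos.2 hγ)).2 ?_)
  linarith [h (f y) hy y]

variable {n : ℕ} {S A : Fin n → Type} [∀ i, Fintype (S i)] [∀ i, Fintype (A i)]

theorem Pmat_mulVec (P : ∀ i : Fin n, (∀ j, S j) → A i → S i → ℝ)
    (ζ : ∀ i : Fin n, (∀ j, S j) → A i → ℝ) (W : (∀ j, S j) → ℝ) (s : ∀ j, S j) :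
    (Pmat P ζ).mulVec W s =
      expectation (fun i => ζ i s) fun a => expectation (fun i => P i s (a i)) W := by
  simp only [Matrix.mulVec, dotProduct, Pmat, Matrix.of_apply, expectation, jprob, Pglob,
    Finset.sum_mul, Finset.mul_sum, mul_assoc]
  exact Finset.sum_comm

variable {P : ∀ i : Fin n, (∀ j, S j) → A i → S i → ℝ}
  {r : ∀ i : Fin n, S i → A i → ℝ} {ζ ζ' : ∀ i : Fin n, (∀ j, S j) → A i → ℝ} {γ τ ε ε' : ℝ}

theorem gz_add_mulVec_eq_regObjective (hζ : IsPolicy ζ) (W : (∀ j, S j) → ℝ) (s : ∀ j, S j) :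
    gz τ r ζ s + γ * (Pmat P ζ).mulVec W s =
      regObjective τ (lookahead γ P r W s) fun i => ζ i s := by
  have hreward : gz τ r ζ s = expectation (fun i => ζ i s)
      (fun a => 𝔼 i, r i (s i) (a i) - τ * Real.log (∏ i, ζ i s (a i))) := by
    simp only [gz, jprob, rglob, expectation, Fintype.expect_eq_sum_div_card, Fintype.card_fin,
      one_div_mul_eq_div]
  have hlookahead : lookahead γ P r W s =
      fun a => 𝔼 i, r i (s i) (a i) + γ * expectation (fun i => P i s (a i)) W := rfl
  rw [hreward, Pmat_mulVec, expectation_sub, expectation_const_mul,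
    expectation_log_prod fun i => hζ i s, regObjective, hlookahead, expectation_add,
    expectation_const_mul]
  ring

variable [∀ i, DecidableEq (S i)]

theorem Pmat_mem_rowStochastic (hP : IsKernel P) (hζ : IsPolicy ζ) :
    Pmat P ζ ∈ Matrix.rowStochastic ℝ (∀ j, S j) := by
  refine Matrix.mem_rowStochastic.2 ⟨fun s s' => Finset.sum_nonneg fun a _ => mul_nonneg
    (Finset.prod_nonneg fun i _ => (hζ i s).1 _) (Finset.prod_nonneg fun i _ => (hP i s _).1 _), ?_⟩
  funext s
  rw [Pmat_mulVec]
  simp only [Pi.one_def, expectation_const fun i => hP i s _, expectation_const fun i => hζ i s]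

theorem Vz_eq_regObjective (hγ0 : 0 ≤ γ) (hγ1 : γ < 1) (hP : IsKernel P) (hζ : IsPolicy ζ)
    (s : ∀ j, S j) :
    Vz γ τ P r ζ s = regObjective τ (lookahead γ P r (Vz γ τ P r ζ) s) fun i => ζ i s := by
  rw [← gz_add_mulVec_eq_regObjective hζ]
  exact tsum_discounted_pow_mulVec (Pmat_mem_rowStochastic hP hζ) hγ0 hγ1 _ s

theorem Vz_le_add (hγ0 : 0 ≤ γ) (hγ1 : γ < 1) (hP : IsKernel P) (hζ : IsPolicy ζ)
    {W : (∀ j, S j) → ℝ}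
    (h : ∀ s, regObjective τ (lookahead γ P r W s) (fun i => ζ i s) ≤ W s + ε) (s : ∀ j, S j) :
    Vz γ τ P r ζ s ≤ W s + ε / (1 - γ) := by
  refine sub_le_iff_le_add'.1
    (le_div_one_sub_of_forall_le (f := fun s => Vz γ τ P r ζ s - W s) hγ1 (fun c hc s => ?_) s)
  have := regObjective_le_add (τ := τ) (fun i => hζ i s)
    (lookahead_le_add hP hγ0 (r := r) (fun s => sub_le_iff_le_add'.1 (hc s)) s)
  rw [← Vz_eq_regObjective hγ0 hγ1 hP hζ] at this
  linarith [h s]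

theorem le_Vz_add (hγ0 : 0 ≤ γ) (hγ1 : γ < 1) (hP : IsKernel P) (hζ : IsPolicy ζ)
    {W : (∀ j, S j) → ℝ}
    (h : ∀ s, W s ≤ regObjective τ (lookahead γ P r W s) (fun i => ζ i s) + ε) (s : ∀ j, S j) :
    W s ≤ Vz γ τ P r ζ s + ε / (1 - γ) := by
  refine sub_le_iff_le_add'.1
    (le_div_one_sub_of_forall_le (f := fun s => W s - Vz γ τ P r ζ s) hγ1 (fun c hc s => ?_) s)
  have := regObjective_le_add (τ := τ) (fun i => hζ i s)
    (lookahead_le_add hP hγ0 (r := r) (fun s => sub_le_iff_le_add'.1 (hc s)) s)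
  rw [← Vz_eq_regObjective hγ0 hγ1 hP hζ] at this
  linarith [h s]

variable [∀ i, Nonempty (A i)] {ρ : (∀ j, S j) → ℝ}

theorem Jobj_sub_le (hγ0 : 0 ≤ γ) (hγ1 : γ < 1) (hP : IsKernel P) (hρ : IsDist ρ)
    (hζ : IsPolicy ζ) (hζ' : IsPolicy ζ') {W : (∀ j, S j) → ℝ}
    (h : ∀ s, regMax τ (lookahead γ P r W s) ≤ W s + ε)
    (h' : ∀ s, W s ≤ regObjective τ (lookahead γ P r W s) (fun i => ζ' i s) + ε') :
    Jobj γ τ P r ζ ρ - Jobj γ τ P r ζ' ρ ≤ (ε + ε') / (1 - γ) := by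
  have hV (s : ∀ j, S j) : Vz γ τ P r ζ s - Vz γ τ P r ζ' s ≤ (ε + ε') / (1 - γ) := by
    rw [add_div]
    linarith [le_Vz_add hγ0 hγ1 hP hζ' h' s, Vz_le_add hγ0 hγ1 hP hζ
      (fun s => (regObjective_le_regMax τ _ fun i => hζ i s).trans (h s)) s]
  calc Jobj γ τ P r ζ ρ - Jobj γ τ P r ζ' ρ = ∑ s, ρ s * (Vz γ τ P r ζ s - Vz γ τ P r ζ' s) := by
        simp only [Jobj, mul_sub, Finset.sum_sub_distrib]
    _ ≤ ∑ s, ρ s * ((ε + ε') / (1 - γ)) :=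
        Finset.sum_le_sum fun s _ => mul_le_mul_of_nonneg_left (hV s) (hρ.1 s)
    _ = (ε + ε') / (1 - γ) := by rw [← Finset.sum_mul, hρ.2, one_mul]

theorem Jobj_sub_regMaximizer_zero_le [NeZero n] {rbar : ℝ} (hγ0 : 0 ≤ γ) (hγ1 : γ < 1)
    (hP : IsKernel P) (hr : ∀ i x a, 0 ≤ r i x a ∧ r i x a ≤ rbar) (hρ : IsDist ρ)
    (hζ : IsPolicy ζ) :
    Jobj γ τ P r ζ ρ - Jobj γ τ P r (fun i _ => regMaximizer τ (fun _ : ∀ i, A i => 0) i) ρ ≤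
      rbar / (1 - γ) := by
  set m := regMax τ fun _ : ∀ i, A i => (0 : ℝ)
  have hlookahead (s : ∀ j, S j) (a : ∀ j, A j) :
      lookahead γ P r (fun _ => 0) s a = 𝔼 i, r i (s i) (a i) := by
    simp [lookahead, expectation_const fun i => hP i s (a i)]
  have hupper (s : ∀ j, S j) : regMax τ (lookahead γ P r (fun _ => 0) s) ≤ 0 + (rbar + m) := by
    rw [zero_add, add_comm]
    refine regMax_le_add fun a => ?_
    rw [hlookahead, zero_add]
    exact Finset.expect_le Finset.univ_nonempty fun i _ => (hr i _ _).2
  have hlower (s : ∀ j, S j) : 0 ≤ regObjective τ (lookahead γ P r (fun _ => 0) s)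
      (regMaximizer τ fun _ : ∀ i, A i => 0) + -m := by
    have : m ≤ _ + 0 := regObjective_le_add (Q' := lookahead γ P r (fun _ => 0) s)
      (isDist_regMaximizer τ _) fun a => by
        rw [hlookahead, add_zero]
        exact Finset.expect_nonneg fun i _ => (hr i _ _).1
    linarith
  refine (Jobj_sub_le hγ0 hγ1 hP hρ hζ (fun i _ => isDist_regMaximizer τ _ i) hupper
    hlower).trans_eq ?_
  rw [add_neg_cancel_right]

end Value

section Localization

theorem HasDecay.exists_le_sum_mul_mismatch {ι : Type*} [Fintype ι] {X : ι → Type}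
    {G : SimpleGraph ι} {μ b : ℝ} {f : ι → (∀ j, X j) → ℝ} (hf : HasDecay G μ b f) (hμ : 0 < μ)
    (m : ι) : ∃ β : ι → ℝ, (∀ j, 0 ≤ β j) ∧ ∑ j, β j ≤ b ∧
      ∀ x y, f m x - f m y ≤ ∑ j, β j * mismatch (x j) (y j) := by
  have : Nonempty ι := ⟨m⟩
  have hcard : (0 : ℝ) < Fintype.card ι := Nat.cast_pos.2 Fintype.card_pos
  have hscale : (1 : ℝ) ≤ (Fintype.card ι : ℝ) ^ μ⁻¹ :=
    Real.one_le_rpow (Nat.one_le_cast.2 Fintype.card_pos) (inv_nonneg.2 hμ.le)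
  obtain ⟨c, α, hc, hα, hle, hcost⟩ := hf (slowlyVarying_const hscale) m
  refine ⟨fun j => c + α j, fun j => add_nonneg hc (hα j), ?_, fun x y => ?_⟩
  · have hweight : ((Fintype.card ι : ℝ) ^ μ⁻¹) ^ (-μ) = (Fintype.card ι : ℝ)⁻¹ := by
      rw [← Real.rpow_mul hcard.le, mul_neg, inv_mul_cancel₀ hμ.ne', Real.rpow_neg_one]
    rw [hweight, ← Finset.sum_mul, ← div_eq_mul_inv, ← div_eq_mul_inv, ← le_sub_iff_add_le,
      ← sub_div, le_div_iff₀ hcard] at hcost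
    rw [Finset.sum_add_distrib, Finset.sum_const, Finset.card_univ, nsmul_eq_mul]
    linarith
  · rcases eq_or_ne x y with rfl | hxy
    · simp [mismatch_self]
    · obtain ⟨k, hk⟩ := Function.ne_iff.1 hxy
      have hck := Finset.single_le_sum (f := fun j => c * mismatch (x j) (y j))
        (fun j _ => mul_nonneg hc (mismatch_nonneg _ _)) (Finset.mem_univ k)
      simp only [mismatch_of_ne hk, mul_one] at hck
      simp only [add_mul, Finset.sum_add_distrib]
      have : f m x - f m y ≤ c + ∑ j, α j * mismatch (x j) (y j) := hle (x, y)
      linarith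

variable {ι : Type*} [Fintype ι] {S A : ι → Type} {G : SimpleGraph ι} {μ b τ θ : ℝ}

theorem HasActionDecay.exists_expect_le_sum_mul_mismatch [Nonempty ι]
    {Q : ι → (∀ j, S j) → (∀ j, A j) → ℝ} (hQ : HasActionDecay G μ b Q) (hμ : 0 < μ) :
    ∃ β : ι → ℝ, (∀ j, 0 ≤ β j) ∧ ∑ j, β j ≤ b ∧ ∀ s x y,
      𝔼 m, Q m s x - 𝔼 m, Q m s y ≤ ∑ j, β j * mismatch (x j) (y j) := by
  choose β hβ hsum hle using HasDecay.exists_le_sum_mul_mismatch hQ hμ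
  refine ⟨fun j => 𝔼 m, β m j, fun j => Finset.expect_nonneg fun m _ => hβ m j, ?_,
    fun s x y => ?_⟩
  · rw [← Finset.expect_sum_comm]
    exact Finset.expect_le Finset.univ_nonempty fun m _ => hsum m
  · simp only [Finset.expect_mul, ← Finset.expect_sum_comm, ← Finset.expect_sub_distrib]
    refine Finset.expect_le_expect fun m _ => ?_
    refine (hle m (fun j => (s j, x j)) fun j => (s j, y j)).trans
      (Finset.sum_le_sum fun j _ => mul_le_mul_of_nonneg_left ?_ (hβ m j))
    exact (mismatch_prod_le _ _ _ _).trans_eq (by rw [mismatch_self, zero_add])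

variable [DecidableEq ι] [∀ i, Fintype (A i)] [∀ i, Nonempty (A i)]

theorem regMax_le_regObjective_add (hτ : 0 < τ) {Q : (∀ i, A i) → ℝ} {Q' : ι → (∀ i, A i) → ℝ}
    {β : ι → ℝ} (hβ : ∀ j, 0 ≤ β j)
    (hQ : ∀ x y, Q x - Q y ≤ ∑ j, β j * mismatch (x j) (y j))
    (hQ' : ∀ i x y, Q' i x - Q' i y ≤ ∑ j, β j * mismatch (x j) (y j))
    (hθ : ∀ i, tv (regMaximizer τ Q i) (regMaximizer τ (Q' i) i) ≤ θ) :
    regMax τ Q ≤ regObjective τ Q (fun i => regMaximizer τ (Q' i) i) + 2 * ((∑ j, β j) * θ) := by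
  classical
  set p := regMaximizer τ Q
  set q : ∀ i, A i → ℝ := fun i => regMaximizer τ (Q' i) i
  have hp : ∀ i, IsDist (p i) := isDist_regMaximizer τ Q
  have hpayoff : expectation p Q - expectation q Q ≤ 0 + ∑ j, β j * tv (p j) (q j) :=
    expectation_sub_le_of_mismatch hp (fun i => isDist_regMaximizer τ _ i) hβ
      (by simpa only [zero_add] using hQ)
  have hentropy (i : ι) : τ * entropy (p i) - τ * entropy (q i) ≤ β i * tv (p i) (q i) := by
    simp only [q, regMaximizer_eq_softmax hτ (Q' i) i]
    refine entropy_sub_entropy_softmax_le _ hτ (hp i) fun a a' => ?_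
    have h := actionValue_sub_le (c := 0) (isDist_regMaximizer τ (Q' i)) hβ
      (by simpa only [zero_add] using hQ' i) i a a'
    rwa [zero_add] at h
  have hsum : ∑ j, β j * tv (p j) (q j) ≤ (∑ j, β j) * θ := by
    rw [Finset.sum_mul]
    exact Finset.sum_le_sum fun j _ => mul_le_mul_of_nonneg_left (hθ j) (hβ j)
  have hentropies := Finset.sum_le_sum fun i (_ : i ∈ Finset.univ) => hentropy i
  rw [Finset.sum_sub_distrib, ← Finset.mul_sum, ← Finset.mul_sum] at hentropies
  have : regMax τ Q = expectation p Q + τ * ∑ i, entropy (p i) := rfl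
  unfold regObjective
  linarith

end Localization

section Truncation

variable {ι : Type*} {S A : ι → Type} [∀ i, Nonempty (S i)] {G : SimpleGraph ι}
  {κ : ℕ} {i : ι}

/-- The state obtained from `s` by resetting the coordinates outside the ball of radius `κ` around
`i` to a default value. -/
def truncate (G : SimpleGraph ι) (κ : ℕ) (i : ι) (s : ∀ j, S j) (j : ι) : S j :=
  if G.dist i j ≤ κ then s j else Classical.arbitrary (S j)

theorem truncate_congr {s s' : ∀ j, S j} (h : ∀ j, G.dist i j ≤ κ → s j = s' j) :
    truncate G κ i s = truncate G κ i s' :=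
  funext fun j => if hj : G.dist i j ≤ κ then by simp only [truncate, if_pos hj, h j hj]
    else by simp only [truncate, if_neg hj]

theorem dist_le_dist_add_one_of_adj (i : ι) {j k : ι} (hjk : G.Adj j k) :
    G.dist i j ≤ G.dist i k + 1 := by
  by_cases hik : G.Reachable i k
  · obtain ⟨w, hw⟩ := hik.exists_walk_length_eq_dist
    simpa only [SimpleGraph.Walk.length_concat, hw] using G.dist_le (w.concat hjk.symm)
  · have hij : ¬ G.Reachable i j := fun hij => hik (hij.trans hjk.reachable)
    simp [SimpleGraph.dist_eq_zero_of_not_reachable hij]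

theorem slowlyVarying_one_add_dist (G : SimpleGraph ι) (i : ι) :
    SlowlyVarying G fun j => 1 + (G.dist i j : ℝ) where
  one_le j := le_add_of_nonneg_right (Nat.cast_nonneg _)
  le_add_one j k hjk := by
    rw [add_assoc]
    exact add_le_add_right (by exact_mod_cast dist_le_dist_add_one_of_adj i hjk) 1

theorem PolicyDecay.tv_truncate_le [Fintype ι] [∀ i, Fintype (A i)] {μ θ : ℝ}
    {ζ : (∀ j, S j) → ∀ i, A i → ℝ}
    (h : PolicyDecay (fun j => max 1 ((κ + 3 : ℝ) - (1 + G.dist i j)) ^ (-μ)) θ ζ) (s : ∀ j, S j) :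
    tv (ζ s i) (ζ (truncate G κ i s) i) ≤ θ * (κ + 2 : ℝ) ^ (-μ) := by
  obtain ⟨c, α, -, hα, hle, hcost⟩ := h i
  have hweight_i : max 1 ((κ + 3 : ℝ) - (1 + G.dist i i)) = κ + 2 := by
    rw [SimpleGraph.dist_self, max_eq_right] <;> push_cast <;> linarith [κ.cast_nonneg (α := ℝ)]
  simp only [hweight_i] at hcost
  refine (hle (s, truncate G κ i s)).trans (le_trans ?_ hcost)
  gcongr with j
  · exact hα j
  · by_cases hj : G.dist i j ≤ κ
    · simp only [mismatches, truncate, if_pos hj, mismatch_self]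
      positivity
    · have hweight_j : max 1 ((κ + 3 : ℝ) - (1 + G.dist i j)) = 1 := by
        have : (κ : ℝ) + 1 ≤ G.dist i j := by exact_mod_cast not_le.1 hj
        exact max_eq_left (by linarith)
      rw [hweight_j, Real.one_rpow]
      exact mismatch_le_one _ _

end Truncation

section NearOptimality

variable {n : ℕ} {S A : Fin n → Type} [∀ i, Fintype (A i)]

theorem IsPolicy.eq_of_Amax_le_one (hA : Amax A ≤ 1) {ζ ζ' : ∀ i : Fin n, (∀ j, S j) → A i → ℝ}
    (hζ : IsPolicy ζ) (hζ' : IsPolicy ζ') : ζ = ζ' := by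
  funext i s a
  have : Subsingleton (A i) := Fintype.card_le_one_iff_subsingleton.1
    ((Finset.le_sup (f := fun i => Fintype.card (A i)) (Finset.mem_univ i)).trans hA)
  have hsum := (hζ i s).2.trans (hζ' i s).2.symm
  rwa [Fintype.sum_subsingleton _ a, Fintype.sum_subsingleton _ a] at hsum

variable [∀ i, Fintype (S i)] [∀ i, DecidableEq (S i)] {G : SimpleGraph (Fin n)} {κ : ℕ}
  {P : ∀ i : Fin n, (∀ j, S j) → A i → S i → ℝ} {r : ∀ i : Fin n, S i → A i → ℝ}
  {ρ : (∀ j, S j) → ℝ} {γ τ μ b rbar δ δ' : ℝ}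

/-- Some `κ`-hop policy is optimal up to `δ` among all policies, for the objective `Jobj`. -/
def HasNearOptimalKHop (G : SimpleGraph (Fin n)) (κ : ℕ) (γ τ : ℝ)
    (P : ∀ i : Fin n, (∀ j, S j) → A i → S i → ℝ) (r : ∀ i : Fin n, S i → A i → ℝ)
    (ρ : (∀ j, S j) → ℝ) (δ : ℝ) : Prop :=
  ∃ ζhat : ∀ i : Fin n, (∀ j, S j) → A i → ℝ, IsPolicy ζhat ∧ IsKHop G κ ζhat ∧
    ∀ ζ : ∀ i : Fin n, (∀ j, S j) → A i → ℝ, IsPolicy ζ →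
      Jobj γ τ P r ζ ρ - Jobj γ τ P r ζhat ρ ≤ δ

theorem HasNearOptimalKHop.mono (h : HasNearOptimalKHop G κ γ τ P r ρ δ) (hδ : δ ≤ δ') :
    HasNearOptimalKHop G κ γ τ P r ρ δ' :=
  let ⟨ζhat, hpol, hkhop, hgap⟩ := h
  ⟨ζhat, hpol, hkhop, fun ζ hζ => (hgap ζ hζ).trans hδ⟩

variable [∀ i, Nonempty (A i)]

theorem hasNearOptimalKHop_of_Amax_le_one (hA : Amax A ≤ 1) :
    HasNearOptimalKHop G κ γ τ P r ρ 0 := by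
  have hpol : IsPolicy fun i (_ : ∀ j, S j) => regMaximizer τ (fun _ : ∀ i, A i => 0) i :=
    fun i _ => isDist_regMaximizer τ _ i
  exact ⟨_, hpol, fun _ _ _ _ => rfl, fun ζ hζ => by rw [hζ.eq_of_Amax_le_one hA hpol, sub_self]⟩

variable [NeZero n]

theorem hasNearOptimalKHop_div_one_sub (hγ0 : 0 ≤ γ) (hγ1 : γ < 1) (hP : IsKernel P)
    (hr : ∀ i x a, 0 ≤ r i x a ∧ r i x a ≤ rbar) (hρ : IsDist ρ) :
    HasNearOptimalKHop G κ γ τ P r ρ (rbar / (1 - γ)) :=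
  ⟨_, fun i _ => isDist_regMaximizer τ _ i, fun _ _ _ _ => rfl,
    fun _ hζ => Jobj_sub_regMaximizer_zero_le hγ0 hγ1 hP hr hρ hζ⟩

theorem hasNearOptimalKHop_rpow_of_nonpos (hP : IsKernel P)
    (hr : ∀ i x a, 0 ≤ r i x a ∧ r i x a ≤ rbar) (hrbar : 0 ≤ rbar) (hγ0 : 0 ≤ γ) (hγ : γ < 4 / 5)
    (hμ : μ ≤ 0) (hρ : IsDist ρ) : HasNearOptimalKHop G κ γ τ P r ρ
      (rbar * ((4 - 3 * γ) / (4 - 5 * γ)) * (κ + 1 : ℝ) ^ (-μ) / (1 - γ)) := by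
  have hκ : 1 ≤ (κ + 1 : ℝ) ^ (-μ) :=
    Real.one_le_rpow (le_add_of_nonneg_left κ.cast_nonneg) (neg_nonneg.2 hμ)
  have hg : 1 ≤ (4 - 3 * γ) / (4 - 5 * γ) := (one_le_div (by linarith)).2 (by linarith)
  refine (hasNearOptimalKHop_div_one_sub hγ0 (by linarith) hP hr hρ).mono
    (div_le_div_of_nonneg_right ?_ (by linarith))
  rw [mul_assoc]
  exact le_mul_of_one_le_right hrbar (one_le_mul_of_one_le_of_one_le hg hκ)

variable [∀ i, Nonempty (S i)]

/-- Every agent plays its part of the regularized maximizer computed at the truncated state. -/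
theorem KernelDecay.hasNearOptimalKHop (hPdecay : KernelDecay G μ P) (hP : IsKernel P)
    (hr : ∀ i x a, 0 ≤ r i x a ∧ r i x a ≤ rbar) (hrbar : 0 ≤ rbar) (hγ0 : 0 ≤ γ) (hγ1 : γ < 1)
    (hμ : 0 < μ) (hb : 0 ≤ b) (hτ : 0 < τ) (hbb : 9 / 8 * (rbar + γ * b) ≤ b)
    (hbτ : 32 * (rbar + γ * b) * 2 ^ μ ≤ τ) (hρ : IsDist ρ) {ε : ℝ} (hε : 0 < ε) :
    HasNearOptimalKHop G κ γ τ P r ρ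
      ((2 * ε + (rbar + γ * b) * (κ + 2 : ℝ) ^ (-μ) / 4) / (1 - γ)) := by
  obtain ⟨V, hV, hfix⟩ := exists_hasDecay_abs_softBellman_sub_le hPdecay hP hr hrbar hγ0 hγ1
    hμ.le hb hτ hbb hbτ hε
  set Q := localLookahead γ P r V
  have hB : 0 ≤ rbar + γ * b := by positivity
  have hQ : HasActionDecay G μ (rbar + γ * b) Q :=
    hPdecay.hasActionDecay_localLookahead hP hr hrbar hγ0 hV
  obtain ⟨β, hβ, hsum, hmismatch⟩ := hQ.exists_expect_le_sum_mul_mismatch hμ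
  set ζhat := fun i (s : ∀ j, S j) => regMaximizer τ (fun a => 𝔼 m, Q m (truncate G κ i s) a) i
  have hpol : IsPolicy ζhat := fun i s => isDist_regMaximizer τ _ i
  have hkhop : IsKHop G κ ζhat := fun i s s' h => by simp only [ζhat, truncate_congr h]
  have htv (s : ∀ j, S j) (i : Fin n) :
      tv (regMaximizer τ (fun a => 𝔼 m, Q m s a) i) (ζhat i s) ≤ 1 / 8 * (κ + 2 : ℝ) ^ (-μ) :=
    (hQ.policyDecay hμ.le hB hτ hbτ
      ((slowlyVarying_one_add_dist G i).max_one_const_sub (κ + 3))).tv_truncate_le s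
  have hgap (s : ∀ j, S j) := regMax_le_regObjective_add hτ hβ (hmismatch s)
    (fun i => hmismatch (truncate G κ i s)) (htv s)
  have hlookahead (s : ∀ j, S j) :
      lookahead γ P r (fun s => 𝔼 m, V m s) s = fun a => 𝔼 m, Q m s a :=
    funext fun a => (expect_localLookahead V s a).symm
  simp only [softBellman, hlookahead] at hfix
  set m₀ := regMax τ fun _ : ∀ i, A i => (0 : ℝ)
  refine ⟨ζhat, hpol, hkhop, fun ζ hζ => (Jobj_sub_le (W := fun s => 𝔼 m, V m s) (ε := ε + m₀)
    (ε' := ε + 2 * ((∑ j, β j) * (1 / 8 * (κ + 2 : ℝ) ^ (-μ))) - m₀) hγ0 hγ1 hP hρ hζ hpol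
    (fun s => ?_) fun s => ?_).trans ?_⟩
  · rw [hlookahead]
    linarith [(abs_le.1 (hfix s)).2]
  · rw [hlookahead]
    linarith [(abs_le.1 (hfix s)).1, hgap s]
  · have hβ_sum : (∑ j, β j) * (κ + 2 : ℝ) ^ (-μ) ≤ (rbar + γ * b) * (κ + 2 : ℝ) ^ (-μ) := by
      gcongr
    refine div_le_div_of_nonneg_right ?_ (sub_nonneg.2 hγ1.le)
    linarith

/-- The decay `b` of the local value functions solves `b = 9 / 8 * (rbar + γ * b)`. -/
theorem KernelDecay.hasNearOptimalKHop_rpow (hPdecay : KernelDecay G μ P) (hP : IsKernel P)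
    (hr : ∀ i x a, 0 ≤ r i x a ∧ r i x a ≤ rbar) (hrbar : 0 < rbar) (hγ0 : 0 ≤ γ) (hγ : γ < 4 / 5)
    (hμ : 0 < μ) (hτ : 64 * (rbar * ((4 - 3 * γ) / (4 - 5 * γ))) * 2 ^ μ ≤ τ) (hρ : IsDist ρ) :
    HasNearOptimalKHop G κ γ τ P r ρ
      (rbar * ((4 - 3 * γ) / (4 - 5 * γ)) * (κ + 1 : ℝ) ^ (-μ) / (1 - γ)) := by
  set δ := rbar * ((4 - 3 * γ) / (4 - 5 * γ))
  have hδ : 0 < δ := mul_pos hrbar (div_pos (by linarith) (by linarith))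
  set b := 9 * rbar / (8 - 9 * γ)
  have hb : 0 < b := div_pos (by linarith) (by linarith)
  have hbb : rbar + γ * b = 8 * rbar / (8 - 9 * γ) := by
    have : 8 - 9 * γ ≠ 0 := by linarith
    have hb_mul : b * (8 - 9 * γ) = 9 * rbar := div_mul_cancel₀ _ this
    rw [eq_div_iff this]
    linear_combination γ * hb_mul
  have hb_fixed : 9 / 8 * (rbar + γ * b) = b := by
    rw [hbb]
    ring
  have hbδ : rbar + γ * b ≤ 2 * δ := by
    simp only [δ, hbb, mul_div_assoc']
    rw [div_le_div_iff₀ (by linarith) (by linarith)]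
    have : 0 ≤ 16 - 40 * γ + 27 * γ ^ 2 := by nlinarith [sq_nonneg (27 * γ - 20)]
    nlinarith
  have hbτ : 32 * (rbar + γ * b) * 2 ^ μ ≤ τ :=
    (mul_le_mul_of_nonneg_right (by linarith) (by positivity)).trans hτ
  have hτpos : 0 < τ := lt_of_lt_of_le (by positivity) hτ
  refine (hPdecay.hasNearOptimalKHop hP hr hrbar.le hγ0 (by linarith) hμ hb.le hτpos hb_fixed.le
    hbτ hρ (ε := δ * (κ + 1 : ℝ) ^ (-μ) / 4) (by positivity)).mono ?_
  have : (rbar + γ * b) * (κ + 2 : ℝ) ^ (-μ) ≤ 2 * δ * (κ + 1 : ℝ) ^ (-μ) :=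
    mul_le_mul hbδ (Real.rpow_le_rpow_of_nonpos (by positivity) (by linarith) (by linarith))
      (by positivity) (by positivity)
  refine div_le_div_of_nonneg_right ?_ (by linarith)
  linarith

end NearOptimality

section Exponent

variable {γ τ μ rbar α x : ℝ}

theorem two_rpow_le_of_le_logb (hμ : 0 < μ) (hx : 0 ≤ x) (h : μ ≤ Real.logb 2 x) : 2 ^ μ ≤ x := by
  rcases hx.eq_or_lt with rfl | hx
  · rw [Real.logb_zero] at h
    linarith
  · exact (Real.le_logb_iff_rpow_le one_lt_two hx).1 h

theorem mul_le_of_le_temperature_ratio (hrbar : 0 ≤ rbar) (hγ : γ < 4 / 5) (hα : 2 ≤ α) (hτ : 0 ≤ τ)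
    (hx : 0 ≤ x)
    (h : x ≤ τ * (4 - 5 * γ) / (6 * rbar * α ^ 2 * Real.exp 1 * (4 - 3 * γ))) :
    64 * (rbar * ((4 - 3 * γ) / (4 - 5 * γ))) * x ≤ τ := by
  have hγ' : 0 < 4 - 5 * γ := by linarith
  have hγ'' : 0 ≤ rbar * (4 - 3 * γ) := mul_nonneg hrbar (by linarith)
  have hconst : 64 ≤ 6 * α ^ 2 * Real.exp 1 := by
    have hα_sq : 4 ≤ α ^ 2 := by nlinarith
    nlinarith [Real.exp_one_gt_d9]
  have hK : 64 * (rbar * (4 - 3 * γ)) ≤ 6 * rbar * α ^ 2 * Real.exp 1 * (4 - 3 * γ) := by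
    linarith [mul_le_mul_of_nonneg_right hconst hγ'']
  have hxK := mul_le_of_le_div₀ (mul_nonneg hτ hγ'.le) ((mul_nonneg (by norm_num) hγ'').trans hK) h
  rw [mul_div_assoc', mul_div_assoc', div_mul_eq_mul_div, div_le_iff₀ hγ']
  linarith [mul_le_mul_of_nonneg_left hK hx]

end Exponent

theorem two_rpow_mul_sum_Cmat_le {n : ℕ} {S A : Fin n → Type} [∀ i, Fintype (S i)]
    (G : SimpleGraph (Fin n)) [DecidableRel G.Adj] (P : ∀ i : Fin n, (∀ j, S j) → A i → S i → ℝ)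
    {μ : ℝ} (hμ : 0 < μ) (h : μ ≤ Real.logb 2 (1 / (2 * ⨆ i, ∑ j, Cmat G P i j))) (i : Fin n) :
    2 ^ μ * ∑ j, Cmat G P i j ≤ 1 := by
  have hle : ∑ j, Cmat G P i j ≤ ⨆ i, ∑ j, Cmat G P i j :=
    le_ciSup (f := fun i => ∑ j, Cmat G P i j) (Set.finite_range _).bddAbove i
  have hnonneg : 0 ≤ ⨆ i, ∑ j, Cmat G P i j :=
    (Finset.sum_nonneg fun j _ => Cmat_nonneg G P i j).trans hle
  have hpow : 2 ^ μ * (2 * ⨆ i, ∑ j, Cmat G P i j) ≤ 1 :=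
    mul_le_of_le_div₀ zero_le_one (by positivity) (two_rpow_le_of_le_logb hμ (by positivity) h)
  have : 0 ≤ 2 ^ μ * ⨆ i, ∑ j, Cmat G P i j := by positivity
  linarith [mul_le_mul_of_nonneg_left hle (Real.rpow_nonneg zero_le_two μ)]

theorem stmt_3_general {n : ℕ} [NeZero n] (G : SimpleGraph (Fin n)) [DecidableRel G.Adj]
    (S A : Fin n → Type) [∀ i, Fintype (S i)] [∀ i, Fintype (A i)] [∀ i, DecidableEq (S i)]
    [∀ i, Nonempty (S i)] [∀ i, Nonempty (A i)]
    (P : ∀ i : Fin n, (∀ j, S j) → A i → S i → ℝ) (hP : IsKernel P) (hPloc : IsLocalKernel G P)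
    (r : ∀ i : Fin n, S i → A i → ℝ) (rbar : ℝ)
    (hr : ∀ i si ai, 0 ≤ r i si ai ∧ r i si ai ≤ rbar)
    (γ τ : ℝ) (hγ0 : 0 ≤ γ) (hγ : γ < 0.8) (hτ : 0 ≤ τ)
    (ρ : (∀ j, S j) → ℝ) (hρ : IsDist ρ) (κ : ℕ) :
    ∃ ζhat : ∀ i : Fin n, (∀ j, S j) → A i → ℝ,
      IsPolicy ζhat ∧ IsKHop G κ ζhat ∧
      ∀ ζ : ∀ i : Fin n, (∀ j, S j) → A i → ℝ, IsPolicy ζ →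
        Jobj γ τ P r ζ ρ - Jobj γ τ P r ζhat ρ ≤
          (rbar * (4 - 3 * γ) / ((1 - γ) * (4 - 5 * γ))) *
            (1 / ((κ : ℝ) + 1) ^
              (min
                (Real.logb 2
                  (τ * (4 - 5 * γ) /
                    (6 * rbar * ((Amax A : ℝ)) ^ 2 * Real.exp 1 * (4 - 3 * γ))))
                (Real.logb 2
                  (1 / (2 * ⨆ i : Fin n, ∑ j, Cmat G P i j))))) := by
  have hγ' : γ < 4 / 5 := by norm_num at hγ ⊢; exact hγ
  have hrbar : 0 ≤ rbar := (hr 0 (Classical.arbitrary _) (Classical.arbitrary _)).elim le_trans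
  have h₁ : 0 < 1 - γ := by linarith
  have h₃ : 0 < 4 - 3 * γ := by linarith
  have h₅ : 0 < 4 - 5 * γ := by linarith
  set x := τ * (4 - 5 * γ) / (6 * rbar * (Amax A : ℝ) ^ 2 * Real.exp 1 * (4 - 3 * γ))
  set μ := min (Real.logb 2 x) (Real.logb 2 (1 / (2 * ⨆ i, ∑ j, Cmat G P i j)))
  change HasNearOptimalKHop G κ γ τ P r ρ _
  have hbound : rbar * (4 - 3 * γ) / ((1 - γ) * (4 - 5 * γ)) * (1 / (κ + 1 : ℝ) ^ μ) =
      rbar * ((4 - 3 * γ) / (4 - 5 * γ)) * (κ + 1 : ℝ) ^ (-μ) / (1 - γ) := by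
    rw [Real.rpow_neg (by positivity)]
    field_simp
  rw [hbound]
  rcases le_or_gt μ 0 with hμ | hμ
  · exact hasNearOptimalKHop_rpow_of_nonpos hP hr hrbar hγ0 hγ' hμ hρ
  rcases le_or_gt (Amax A) 1 with hA | hA
  · exact (hasNearOptimalKHop_of_Amax_le_one hA).mono (by positivity)
  have hx : 2 ^ μ ≤ x := two_rpow_le_of_le_logb hμ (by positivity) (min_le_left _ _)
  have hrbar_pos : 0 < rbar := hrbar.lt_of_ne' fun h => by
    have : x = 0 := by simp [x, h]
    linarith [Real.rpow_pos_of_pos two_pos μ]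
  have hdecay : KernelDecay G μ P := kernelDecay_of_sum_Cmat_le G hPloc hμ.le
    (two_rpow_mul_sum_Cmat_le G P hμ (min_le_right _ _))
  exact hdecay.hasNearOptimalKHop_rpow hP hr hrbar_pos hγ0 hγ' hμ
    (mul_le_of_le_temperature_ratio hrbar hγ' (by exact_mod_cast hA) hτ (by positivity) hx) hρ

/-- near-optimality of `κ`-hop policies: under `γ < 0.8`,
`τ ≥ 6 r̄ A_max² e (4−3γ)/(4−5γ)` and `∑_{j∈N_i} C_{ij} < 1/2` for all `i`, for every
`κ` there exists a `κ`-hop joint policy `ζ̂` such that, for every joint policy `ζ`,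
`J(ζ) − J(ζ̂) ≤ ( r̄(4−3γ) / ((1−γ)(4−5γ)) ) / (κ+1)^μ`, where
`μ = min( log₂(τ(4−5γ)/(6 r̄ A_max² e (4−3γ))), log₂(1/(2 max_i ∑_{j∈N_i} C_{ij})) )`. -/
theorem stmt_3 {n : ℕ} [NeZero n] (G : SimpleGraph (Fin n)) [DecidableRel G.Adj]
    (S A : Fin n → Type)
    [∀ i, Fintype (S i)] [∀ i, Fintype (A i)]
    [∀ i, DecidableEq (S i)] [∀ i, DecidableEq (A i)]
    [∀ i, Nonempty (S i)] [∀ i, Nonempty (A i)]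
    (P : ∀ i : Fin n, (∀ j, S j) → A i → S i → ℝ)
    (hP : IsKernel P) (hPloc : IsLocalKernel G P)
    (r : ∀ i : Fin n, S i → A i → ℝ) (rbar : ℝ)
    (hr : ∀ i si ai, 0 ≤ r i si ai ∧ r i si ai ≤ rbar)
    (γ τ : ℝ) (hγ0 : 0 < γ) (hγ : γ < 0.8)
    (hτ : 6 * rbar * ((Amax A : ℝ)) ^ 2 * Real.exp 1 * (4 - 3 * γ) / (4 - 5 * γ) ≤ τ)
    (hC : ∀ i, ∑ j, Cmat G P i j < 1 / 2)
    (ρ : (∀ j, S j) → ℝ) (hρ : IsDist ρ)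
    (κ : ℕ) :
    ∃ ζhat : ∀ i : Fin n, (∀ j, S j) → A i → ℝ,
      IsPolicy ζhat ∧ IsKHop G κ ζhat ∧
      ∀ ζ : ∀ i : Fin n, (∀ j, S j) → A i → ℝ, IsPolicy ζ →
        Jobj γ τ P r ζ ρ - Jobj γ τ P r ζhat ρ ≤
          (rbar * (4 - 3 * γ) / ((1 - γ) * (4 - 5 * γ))) *
            (1 / ((κ : ℝ) + 1) ^
              (min
                (Real.logb 2
                  (τ * (4 - 5 * γ) /
                    (6 * rbar * ((Amax A : ℝ)) ^ 2 * Real.exp 1 * (4 - 3 * γ))))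
                (Real.logb 2
                  (1 / (2 * ⨆ i : Fin n, ∑ j, Cmat G P i j))))) := by
  have hdiv : 0 ≤ (4 - 3 * γ) / (4 - 5 * γ) := by norm_num at hγ; apply div_nonneg <;> linarith
  have hrbar : 0 ≤ rbar := (hr 0 (Classical.arbitrary _) (Classical.arbitrary _)).elim le_trans
  have hτ0 : 0 ≤ τ := le_trans (by rw [mul_div_assoc]; positivity) hτ
  exact stmt_3_general G S A P hP hPloc r rbar hr γ τ hγ0.le hγ hτ0 ρ hρ κ

end LPI
end
end

section
/- Let A ∈ ℝ^{n×n} be a (ν,μ)-decay matrix and A' ∈ ℝ^{n×n} be a (ν',μ)-decay matrix, both with respect to the same graph distance. Then the matrix product AA' is (νν', μ)-decay. -/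
open scoped BigOperators

noncomputable section

/-- A `(ν,μ)`-decay matrix with respect to a distance function `dist`. -/
def IsDecayMat {n : ℕ} (dist : Fin n → Fin n → ℕ) (ν μ : ℝ)
    (M : Fin n → Fin n → ℝ) : Prop :=
  (∀ i j, 0 ≤ M i j) ∧
  (∀ i, ∑ j, M i j * ((dist i j : ℝ) + 1) ^ μ ≤ ν) ∧
  (∀ j, ∑ i, M i j * ((dist i j : ℝ) + 1) ^ μ ≤ ν)

/-! The weight `(d + 1) ^ μ` is submultiplicative along paths `i → k → j`: by the triangle
inequality `d i j + 1 ≤ (d i k + 1) * (d k j + 1)`. A submultiplicative weight can be distributed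
over the two factors of each term `A i k * B k j`, so a weighted row sum of `A * B` is at most a
weighted row sum of `A` times the largest weighted row sum of `B`. Column sums are row sums of
the transpose. -/

open Matrix

section Weighted

variable {l m n R : Type*} [CommSemiring R] [PartialOrder R] [IsOrderedRing R]

theorem weighted_row_sum_mul_le [Fintype m] [Fintype n] {u M : Matrix l m R} {v N : Matrix m n R}
    {w : Matrix l n R} {ν ν' : R} {i : l} (hM : ∀ k, 0 ≤ M i k) (hN : ∀ k j, 0 ≤ N k j)
    (hu : ∀ k, 0 ≤ u i k) (hw : ∀ k j, w i j ≤ u i k * v k j)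
    (hMu : ∑ k, M i k * u i k ≤ ν) (hNv : ∀ k, ∑ j, N k j * v k j ≤ ν') (hν' : 0 ≤ ν') :
    ∑ j, (M * N) i j * w i j ≤ ν * ν' := by
  have term_le (j : n) (k : m) :
      M i k * N k j * w i j ≤ M i k * u i k * (N k j * v k j) :=
    (mul_le_mul_of_nonneg_left (hw k j) (mul_nonneg (hM k) (hN k j))).trans_eq
      (mul_mul_mul_comm ..)
  calc ∑ j, (M * N) i j * w i j
      = ∑ j, ∑ k, M i k * N k j * w i j := by simp only [mul_apply, Finset.sum_mul]
    _ ≤ ∑ j, ∑ k, M i k * u i k * (N k j * v k j) :=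
      Finset.sum_le_sum fun j _ ↦ Finset.sum_le_sum fun k _ ↦ term_le j k
    _ = ∑ k, M i k * u i k * ∑ j, N k j * v k j := by
      rw [Finset.sum_comm]; simp only [Finset.mul_sum]
    _ ≤ ∑ k, M i k * u i k * ν' := by
      gcongr with k
      · exact mul_nonneg (hM k) (hu k)
      · exact hNv k
    _ = (∑ k, M i k * u i k) * ν' := (Finset.sum_mul ..).symm
    _ ≤ ν * ν' := by gcongr

/-- The nonnegative matrices satisfying the two bounds of Schur's test with weight `w`: all
`w`-weighted row sums and column sums are at most `ν`. -/
structure IsSchurBounded [Fintype m] [Fintype n] (w : Matrix m n R) (ν : R)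
    (M : Matrix m n R) : Prop where
  nonneg : ∀ i j, 0 ≤ M i j
  row_sum_le : ∀ i, ∑ j, M i j * w i j ≤ ν
  col_sum_le : ∀ j, ∑ i, M i j * w i j ≤ ν

theorem IsSchurBounded.mul [Fintype l] [Fintype m] [Fintype n]
    {u M : Matrix l m R} {v N : Matrix m n R} {w : Matrix l n R} {ν ν' : R}
    (hM : IsSchurBounded u ν M) (hN : IsSchurBounded v ν' N)
    (hu : ∀ i k, 0 ≤ u i k) (hv : ∀ k j, 0 ≤ v k j) (hw : ∀ i k j, w i j ≤ u i k * v k j)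
    (hν : 0 ≤ ν) (hν' : 0 ≤ ν') : IsSchurBounded w (ν * ν') (M * N) where
  nonneg _ _ := Finset.sum_nonneg fun _ _ ↦ mul_nonneg (hM.nonneg ..) (hN.nonneg ..)
  row_sum_le i := weighted_row_sum_mul_le (hM.nonneg i) hN.nonneg (hu i) (hw i)
    (hM.row_sum_le i) hN.row_sum_le hν'
  col_sum_le j := by
    have transpose_row_sum_le : ∑ i, (Nᵀ * Mᵀ) j i * wᵀ j i ≤ ν' * ν :=
      weighted_row_sum_mul_le (u := vᵀ) (v := uᵀ) (fun k ↦ hN.nonneg k j) (fun k i ↦ hM.nonneg i k)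
        (fun k ↦ hv k j) (fun k i ↦ (hw i k j).trans_eq (mul_comm ..))
        (hN.col_sum_le j) hM.col_sum_le hν
    rwa [← transpose_mul, mul_comm ν'] at transpose_row_sum_le

end Weighted

section Decay

variable {ι : Type*} {d : ι → ι → ℝ} {μ : ℝ}

/-- The polynomial weight `(d i j + 1) ^ μ` that measures off-diagonal decay. Here `d` is any
real-valued function, so that distances in directed and in weighted graphs are included. -/
def decayWeight (d : ι → ι → ℝ) (μ : ℝ) : Matrix ι ι ℝ :=
  of fun i j ↦ (d i j + 1) ^ μ

theorem decayWeight_nonneg (hd : ∀ i j, 0 ≤ d i j) (i j : ι) : 0 ≤ decayWeight d μ i j :=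
  Real.rpow_nonneg (add_nonneg (hd i j) zero_le_one) μ

theorem decayWeight_le_mul (hd : ∀ i j, 0 ≤ d i j) (hd_tri : ∀ i j k, d i k ≤ d i j + d j k)
    (hμ : 0 ≤ μ) (i k j : ι) :
    decayWeight d μ i j ≤ decayWeight d μ i k * decayWeight d μ k j := by
  have add_one_nonneg (x y : ι) : 0 ≤ d x y + 1 := add_nonneg (hd x y) zero_le_one
  have add_one_le : d i j + 1 ≤ (d i k + 1) * (d k j + 1) := by
    linarith [hd_tri i k j, mul_nonneg (hd i k) (hd k j)]
  calc (d i j + 1) ^ μ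
      ≤ ((d i k + 1) * (d k j + 1)) ^ μ := Real.rpow_le_rpow (add_one_nonneg i j) add_one_le hμ
    _ = (d i k + 1) ^ μ * (d k j + 1) ^ μ :=
      Real.mul_rpow (add_one_nonneg i k) (add_one_nonneg k j)

theorem isDecayMat_iff_isSchurBounded {n : ℕ} {dist : Fin n → Fin n → ℕ} {ν μ : ℝ}
    {M : Matrix (Fin n) (Fin n) ℝ} :
    IsDecayMat dist ν μ M ↔ IsSchurBounded (decayWeight (fun i j ↦ (dist i j : ℝ)) μ) ν M :=
  ⟨fun ⟨nonneg, row, col⟩ ↦ ⟨nonneg, row, col⟩, fun ⟨nonneg, row, col⟩ ↦ ⟨nonneg, row, col⟩⟩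

theorem stmt_6_general [Fintype ι] (hd : ∀ i j, 0 ≤ d i j)
    (hd_tri : ∀ i j k, d i k ≤ d i j + d j k) (hμ : 0 ≤ μ) {ν ν' : ℝ} (hν : 0 ≤ ν) (hν' : 0 ≤ ν')
    {A B : Matrix ι ι ℝ} (hA : IsSchurBounded (decayWeight d μ) ν A)
    (hB : IsSchurBounded (decayWeight d μ) ν' B) :
    IsSchurBounded (decayWeight d μ) (ν * ν') (A * B) :=
  hA.mul hB (decayWeight_nonneg hd) (decayWeight_nonneg hd) (decayWeight_le_mul hd hd_tri hμ) hν hν'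

end Decay

/-- the product `A * A'` of a `(ν,μ)`-decay matrix and a
`(ν',μ)`-decay matrix is `(νν', μ)`-decay. -/
theorem stmt_6 (n : ℕ) (dist : Fin n → Fin n → ℕ)
    (hdist_self : ∀ i, dist i i = 0)
    (hdist_symm : ∀ i j, dist i j = dist j i)
    (hdist_tri : ∀ i j k, dist i k ≤ dist i j + dist j k)
    (ν ν' μ : ℝ) (hν : 0 < ν) (hν' : 0 < ν') (hμ : 0 < μ)
    (A A' : Fin n → Fin n → ℝ)
    (hA : IsDecayMat dist ν μ A) (hA' : IsDecayMat dist ν' μ A') :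
    IsDecayMat dist (ν * ν') μ (fun i j => ∑ k, A i k * A' k j) :=
  isDecayMat_iff_isSchurBounded.2 <| stmt_6_general (fun _ _ ↦ Nat.cast_nonneg _)
    (fun i j k ↦ mod_cast hdist_tri i j k) hμ.le hν.le hν'.le
    (isDecayMat_iff_isSchurBounded.1 hA) (isDecayMat_iff_isSchurBounded.1 hA')
end
end

section
/- Let d and d' be two σ-regular probability distributions over the same finite set {1,…,M}. Then |H(d) − H(d')| ≤ σ · TV(d,d'), where H(d) = −∑_{m=1}^M d_m log d_m is the entropy. -/
open scoped BigOperators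

noncomputable section

/-- A probability distribution on a finite type. -/
def IsDist {X : Type} [Fintype X] (d : X → ℝ) : Prop :=
  (∀ x, 0 ≤ d x) ∧ ∑ x, d x = 1

/-- Total variation distance. -/
def tv {X : Type} [Fintype X] (d d' : X → ℝ) : ℝ :=
  (1 / 2) * ∑ x, |d x - d' x|

/-- A `σ`-regular distribution: positive entries with log-ratios bounded by `σ`. -/
def IsRegularDist {X : Type} (σ : ℝ) (d : X → ℝ) : Prop :=
  (∀ x, 0 < d x) ∧ ∀ x y, Real.log (d x / d y) ≤ σ

/-- The entropy `H(d) = -∑ m d_m log d_m`. -/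
def entropy {X : Type} [Fintype X] (d : X → ℝ) : ℝ :=
  -∑ x, d x * Real.log (d x)

/-!
By concavity of `-t log t`, `H(d) - H(d') ≤ ∑ m, (d'_m - d_m) log d'_m`. The weights `d'_m - d_m`
sum to zero, so `log d'_m` may be replaced by its difference from the midpoint of its range; that
difference is at most `σ / 2` in absolute value because `d'` is `σ`-regular. This bounds the right
side by `(σ / 2) ∑ m, |d_m - d'_m| = σ · TV(d, d')`, and exchanging `d` and `d'` gives the other
bound.
-/

theorem abs_sum_mul_le_of_sum_eq_zero {ι K : Type*} [Field K] [LinearOrder K]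
    [IsStrictOrderedRing K] {s : Finset ι} {f g : ι → K} {σ : K} (hf : ∑ i ∈ s, f i = 0)
    (hg : ∀ i ∈ s, ∀ j ∈ s, g i - g j ≤ σ) :
    |∑ i ∈ s, f i * g i| ≤ σ / 2 * ∑ i ∈ s, |f i| := by
  rcases s.eq_empty_or_nonempty with rfl | hs
  · simp
  obtain ⟨c, abs_sub_le⟩ : ∃ c, ∀ i ∈ s, |g i - c| ≤ σ / 2 := by
    obtain ⟨m, hm, hmin⟩ := s.exists_min_image g hs
    exact ⟨g m + σ / 2, fun i hi =>
      abs_le.2 ⟨by linarith [hmin i hi], by linarith [hg i hi m hm]⟩⟩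
  calc |∑ i ∈ s, f i * g i|
      = |∑ i ∈ s, f i * (g i - c)| := by
        simp only [mul_sub, Finset.sum_sub_distrib, ← Finset.sum_mul, hf, zero_mul, sub_zero]
    _ ≤ ∑ i ∈ s, |f i * (g i - c)| := Finset.abs_sum_le_sum_abs _ _
    _ ≤ ∑ i ∈ s, σ / 2 * |f i| := by
        refine Finset.sum_le_sum fun i hi => ?_
        rw [abs_mul, mul_comm]
        exact mul_le_mul_of_nonneg_right (abs_sub_le i hi) (abs_nonneg _)
    _ = σ / 2 * ∑ i ∈ s, |f i| := (Finset.mul_sum ..).symm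

theorem mul_log_sub_log_le_sub {a b : ℝ} (ha : 0 ≤ a) (hb : 0 < b) :
    a * (Real.log b - Real.log a) ≤ b - a := by
  rcases ha.eq_or_lt with rfl | ha
  · simpa using hb.le
  calc a * (Real.log b - Real.log a)
      = a * Real.log (b / a) := by rw [Real.log_div hb.ne' ha.ne']
    _ ≤ a * (b / a - 1) :=
        mul_le_mul_of_nonneg_left (Real.log_le_sub_one_of_pos (div_pos hb ha)) ha.le
    _ = b - a := by field_simp

theorem tv_comm {X : Type} [Fintype X] (d d' : X → ℝ) : tv d d' = tv d' d := by
  simp only [tv, abs_sub_comm]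

theorem entropy_sub_le_sum_sub_mul_log {X : Type} [Fintype X] {d d' : X → ℝ}
    (hd : ∀ x, 0 ≤ d x) (hd' : ∀ x, 0 < d' x) (hsum : ∑ x, d x = ∑ x, d' x) :
    entropy d - entropy d' ≤ ∑ x, (d' x - d x) * Real.log (d' x) := by
  have gibbs : ∑ x, d x * (Real.log (d' x) - Real.log (d x)) ≤ 0 :=
    calc ∑ x, d x * (Real.log (d' x) - Real.log (d x))
        ≤ ∑ x, (d' x - d x) :=
          Finset.sum_le_sum fun x _ => mul_log_sub_log_le_sub (hd x) (hd' x)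
      _ = 0 := by rw [Finset.sum_sub_distrib, hsum, sub_self]
  simp only [mul_sub, sub_mul, Finset.sum_sub_distrib, entropy] at gibbs ⊢
  linarith

namespace IsRegularDist

variable {X : Type} {σ : ℝ} {d d' : X → ℝ}

theorem log_sub_log_le (hd : IsRegularDist σ d) (x y : X) :
    Real.log (d x) - Real.log (d y) ≤ σ := by
  rw [← Real.log_div (hd.1 x).ne' (hd.1 y).ne']
  exact hd.2 x y

theorem entropy_sub_le [Fintype X] (hd' : IsRegularDist σ d') (hd : ∀ x, 0 ≤ d x)
    (hsum : ∑ x, d x = ∑ x, d' x) : entropy d - entropy d' ≤ σ * tv d d' := by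
  have sum_sub_eq_zero : ∑ x, (d' x - d x) = 0 := by
    rw [Finset.sum_sub_distrib, hsum, sub_self]
  calc entropy d - entropy d'
      ≤ ∑ x, (d' x - d x) * Real.log (d' x) := entropy_sub_le_sum_sub_mul_log hd hd'.1 hsum
    _ ≤ |∑ x, (d' x - d x) * Real.log (d' x)| := le_abs_self _
    _ ≤ σ / 2 * ∑ x, |d' x - d x| :=
        abs_sum_mul_le_of_sum_eq_zero sum_sub_eq_zero fun x _ y _ => hd'.log_sub_log_le x y
    _ = σ * tv d' d := by rw [tv]; ring
    _ = σ * tv d d' := by rw [tv_comm]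

end IsRegularDist

theorem stmt_7_general {X : Type} [Fintype X] {σ : ℝ} {d d' : X → ℝ}
    (hreg : IsRegularDist σ d) (hreg' : IsRegularDist σ d') (hsum : ∑ x, d x = ∑ x, d' x) :
    |entropy d - entropy d'| ≤ σ * tv d d' := by
  refine abs_sub_le_iff.2 ⟨hreg'.entropy_sub_le (fun x => (hreg.1 x).le) hsum, ?_⟩
  rw [tv_comm]
  exact hreg.entropy_sub_le (fun x => (hreg'.1 x).le) hsum.symm

/-- if `d` and `d'` are `σ`-regular probability distributions on the same
finite set `{1,…,M}`, then `|H(d) - H(d')| ≤ σ · TV(d,d')`. -/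
theorem stmt_7 (M : ℕ) (σ : ℝ) (d d' : Fin M → ℝ)
    (hd : IsDist d) (hd' : IsDist d')
    (hreg : IsRegularDist σ d) (hreg' : IsRegularDist σ d') :
    |entropy d - entropy d'| ≤ σ * tv d d' :=
  stmt_7_general hreg hreg' (hd.2.trans hd'.2.symm)
end
end

section
/- Let d and d' be probability distributions on {1,…,m} with strictly positive entries. Suppose that for all i,j: |log(d_i/d_j) − log(d'_i/d'_j)| ≤ ε and max(|log(d_i/d_j)|, |log(d'_i/d'_j)|) ≤ c. Then TV(d,d') ≤ (1/2) m² e^c (e^ε − 1). -/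
open scoped BigOperators

noncomputable section

/-!
Exponentiating the hypothesis on log-ratios gives `d i * d' j ≤ e^ε * (d' i * d j)`. Summing over
`j` removes the normalisations, so `d ≤ e^ε d'` pointwise, and symmetrically `d' ≤ e^ε d`. Hence
`|d - d'| ≤ (e^ε - 1) min(d, d')`, and summing gives `TV(d, d') ≤ (e^ε - 1) / 2`, which is better
than the required bound because `m² e^c ≥ 1`.
-/

theorem abs_sub_le_sub_one_mul_min {R : Type*} [Ring R] [LinearOrder R] [IsOrderedAddMonoid R]
    {a b K : R} (hab : a ≤ K * b) (hba : b ≤ K * a) : |a - b| ≤ (K - 1) * min a b := by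
  rcases le_total a b with h | h
  · rw [abs_sub_comm, abs_of_nonneg (sub_nonneg.2 h), min_eq_left h, sub_one_mul]
    exact sub_le_sub_right hba a
  · rw [abs_of_nonneg (sub_nonneg.2 h), min_eq_right h, sub_one_mul]
    exact sub_le_sub_right hab b

theorem mul_le_exp_mul_of_log_div_sub_log_div_le {a b a' b' ε : ℝ} (ha : 0 < a) (hb : 0 < b)
    (ha' : 0 < a') (hb' : 0 < b') (h : Real.log (a / b) - Real.log (a' / b') ≤ ε) :
    a * b' ≤ Real.exp ε * (a' * b) := by
  have hratio : (a / b) / (a' / b') ≤ Real.exp ε := by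
    rwa [← Real.log_div (by positivity) (by positivity), Real.log_le_iff_le_exp (by positivity)]
      at h
  rwa [div_div_div_eq, div_le_iff₀ (by positivity), mul_comm b] at hratio

section FiniteDistributions

variable {X : Type} [Fintype X] {d d' : X → ℝ}

theorem IsDist.nonempty (hd : IsDist d) : Nonempty X := by
  have hsum : ∑ x, d x ≠ 0 := hd.2.symm ▸ one_ne_zero
  exact Finset.univ_nonempty_iff.1 (Finset.nonempty_of_sum_ne_zero hsum)

theorem IsDist.le_mul_of_mul_le_mul {K : ℝ} (hd : IsDist d) (hd' : IsDist d') {i : X}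
    (h : ∀ j, d i * d' j ≤ K * (d' i * d j)) : d i ≤ K * d' i := by
  calc
    d i = ∑ j, d i * d' j := by rw [← Finset.mul_sum, hd'.2, mul_one]
    _ ≤ ∑ j, K * (d' i * d j) := Finset.sum_le_sum fun j _ => h j
    _ = K * d' i := by rw [← Finset.mul_sum, ← Finset.mul_sum, hd.2, mul_one]

theorem IsDist.le_exp_mul_of_log_div_sub_log_div_le {ε : ℝ} (hd : IsDist d) (hd' : IsDist d')
    (hdpos : ∀ i, 0 < d i) (hd'pos : ∀ i, 0 < d' i)
    (h : ∀ i j, Real.log (d i / d j) - Real.log (d' i / d' j) ≤ ε) (i : X) :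
    d i ≤ Real.exp ε * d' i :=
  hd.le_mul_of_mul_le_mul hd' fun j =>
    mul_le_exp_mul_of_log_div_sub_log_div_le (hdpos i) (hdpos j) (hd'pos i) (hd'pos j) (h i j)

theorem IsDist.one_le_of_le_mul {K : ℝ} (hd : IsDist d) (hd' : IsDist d')
    (h : ∀ i, d i ≤ K * d' i) : 1 ≤ K := by
  calc
    1 = ∑ i, d i := hd.2.symm
    _ ≤ ∑ i, K * d' i := Finset.sum_le_sum fun i _ => h i
    _ = K := by rw [← Finset.mul_sum, hd'.2, mul_one]

theorem tv_le_of_le_mul {K : ℝ} (hd : IsDist d) (hd' : IsDist d')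
    (h : ∀ i, d i ≤ K * d' i) (h' : ∀ i, d' i ≤ K * d i) : tv d d' ≤ 1 / 2 * (K - 1) := by
  have hK : 0 ≤ K - 1 := sub_nonneg.2 (hd.one_le_of_le_mul hd' h)
  have hsum : ∑ i, |d i - d' i| ≤ K - 1 := by
    calc
      ∑ i, |d i - d' i| ≤ ∑ i, (K - 1) * min (d i) (d' i) :=
        Finset.sum_le_sum fun i _ => abs_sub_le_sub_one_mul_min (h i) (h' i)
      _ ≤ ∑ i, (K - 1) * d i := by gcongr; exact min_le_left _ _
      _ = K - 1 := by rw [← Finset.mul_sum, hd.2, mul_one]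
  unfold tv
  gcongr

theorem stmt_8_general (hd : IsDist d) (hd' : IsDist d')
    (hdpos : ∀ i, 0 < d i) (hd'pos : ∀ i, 0 < d' i) {ε : ℝ}
    (hε : ∀ i j, |Real.log (d i / d j) - Real.log (d' i / d' j)| ≤ ε) :
    tv d d' ≤ 1 / 2 * (Real.exp ε - 1) :=
  tv_le_of_le_mul hd hd'
    (hd.le_exp_mul_of_log_div_sub_log_div_le hd' hdpos hd'pos fun i j =>
      (abs_sub_le_iff.1 (hε i j)).1)
    (hd'.le_exp_mul_of_log_div_sub_log_div_le hd hd'pos hdpos fun i j =>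
      (abs_sub_le_iff.1 (hε i j)).2)

end FiniteDistributions

/-- if `d, d'` are strictly positive probability distributions on `{1,…,m}`
such that all pairwise log-ratios of `d` and `d'` differ by at most `ε` and are bounded
in absolute value by `c`, then `TV(d,d') ≤ (1/2) m² e^c (e^ε − 1)`. -/
theorem stmt_8 (m : ℕ) (d d' : Fin m → ℝ)
    (hd : IsDist d) (hd' : IsDist d')
    (hdpos : ∀ i, 0 < d i) (hd'pos : ∀ i, 0 < d' i)
    (ε c : ℝ)
    (hε : ∀ i j, |Real.log (d i / d j) - Real.log (d' i / d' j)| ≤ ε)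
    (hc : ∀ i j, |Real.log (d i / d j)| ≤ c ∧ |Real.log (d' i / d' j)| ≤ c) :
    tv d d' ≤ (1 / 2) * (m : ℝ) ^ 2 * Real.exp c * (Real.exp ε - 1) := by
  obtain ⟨i⟩ := hd.nonempty
  have hm : (1 : ℝ) ≤ m := by exact_mod_cast i.pos
  have hexpc : 1 ≤ Real.exp c := Real.one_le_exp ((abs_nonneg _).trans (hc i i).1)
  have hexpε : 0 ≤ Real.exp ε - 1 :=
    sub_nonneg.2 (Real.one_le_exp ((abs_nonneg _).trans (hε i i)))
  calc
    tv d d' ≤ 1 / 2 * 1 ^ 2 * 1 * (Real.exp ε - 1) := by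
      simpa using stmt_8_general hd hd' hdpos hd'pos hε
    _ ≤ 1 / 2 * (m : ℝ) ^ 2 * Real.exp c * (Real.exp ε - 1) := by gcongr
end
end
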